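/- Asymptotic nilpotency in density of cellular automata is undecidable: there is no total computable function g from codes (n, f) (of radius-1 cellular automata Φ_{n,f}) to Bool such that g(n,f) = true if and only if Φ_{n,f} is asymptotically nilpotent in density. -/

import Mathlib

open Filter

/-- The radius-1 cellular automaton induced by a local rule `f`. -/
def caOfRule {n : ℕ} (f : Fin (n + 1) × Fin (n + 1) × Fin (n + 1) → Fin (n + 1)) :
    (ℤ → Fin (n + 1)) → (ℤ → Fin (n + 1)) :=
  fun x i => f (x (i - 1), x i, x (i + 1))

/-- The Besicovitch pseudometric on `α^ℤ`:
`d_B(x,y) = limsup_{m→∞} |{i ∈ [-m,m] : x_i ≠ y_i}| / (2m+1)`. -/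
noncomputable def besicovitchDist {α : Type} [DecidableEq α] (x y : ℤ → α) : ℝ :=
  Filter.limsup (fun m : ℕ =>
      (((Finset.Icc (-(m : ℤ)) (m : ℤ)).filter fun i => x i ≠ y i).card : ℝ) /
        (2 * (m : ℝ) + 1))
    Filter.atTop

namespace AND

/-- The local constraints on the `p`-adic skeleton along an arithmetic progression of tracks. -/
def SkelRule (p K : ℕ) (r u : ℕ → ZMod p) : Prop :=
  (∀ v ≤ K, u v ≠ 0) ∧
  (∀ v ≤ K, r v ≠ 0 → u v = r v) ∧
  (∀ v, v + 2 ≤ K → r (v + 2) = 2 * r (v + 1) - r v) ∧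
  (∀ v, v + 2 ≤ K → (2 * u (v + 1) = u v + u (v + 2) ∨ u (v + 2) = 2 * u (v + 1) ∨
      u v = - u (v + 2) ∨ u v = 2 * u (v + 1))) ∧
  (∀ v, v + p ≤ K → u (v + 2) = 2 * u (v + 1) → u (v + 3) = 3 * u (v + 1) →
      (u (v + p) = u (v + 1) ∨ u (v + p) = u v + u (v + 1) ∨ u v = - u (v + 1)))

/-- The sequences are the true `p`-adic skeleton up to level `k`. -/
def Struct (p K : ℕ) (r u : ℕ → ℤ → ZMod p) (k : ℕ) (A B : ℤ) : Prop :=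
  (∀ v ≤ K, ∀ m : ℤ, r v m = ((m + A + v * B : ℤ) : ZMod p)) ∧
  ∀ v ≤ K, ∀ m : ℤ, ∀ j < k, ∀ c : ℤ, m + A + v * B = (p : ℤ) ^ j * c →
    (c : ZMod p) ≠ 0 → u v m = c

theorem exists_avoid {p : ℕ} [Fact p.Prime] (hp : 5 ≤ p) (a b c d : ZMod p) :
    ∃ z : ZMod p, z ≠ a ∧ z ≠ b ∧ z ≠ c ∧ z ≠ d := by
  have h : ({a, b, c, d} : Finset (ZMod p)).card < Fintype.card (ZMod p) := by
    rw [ZMod.card]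
    exact lt_of_le_of_lt (Finset.card_le_four) (by omega)
  obtain ⟨z, hz⟩ := Finset.exists_mem_notMem_of_card_lt_card
    (s := ({a, b, c, d} : Finset (ZMod p))) (t := Finset.univ) (by simpa [Finset.card_univ] using h)
  refine ⟨z, ?_⟩
  simpa [not_or] using hz.2

theorem exists_large {p : ℕ} [Fact p.Prime] (z : ZMod p) (b : ℤ) :
    ∃ Z : ℤ, b ≤ Z ∧ (Z : ZMod p) = z := by
  have hp : (0 : ℤ) < p := by exact_mod_cast (Fact.out : p.Prime).pos
  refine ⟨(z.val : ℤ) + p * |b|, ?_, by simp⟩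
  nlinarith [le_abs_self b, abs_nonneg b, Int.natCast_nonneg z.val]

theorem exists_small {p : ℕ} [Fact p.Prime] (z : ZMod p) (b : ℤ) :
    ∃ Z : ℤ, Z ≤ b ∧ (Z : ZMod p) = z := by
  obtain ⟨Z, h1, h2⟩ := exists_large (-z) (-b)
  exact ⟨-Z, by omega, by simp [h2]⟩

/-- The star lemma. -/
theorem star {p : ℕ} [Fact p.Prime] (hp : 5 ≤ p) (G κ : ℤ → ZMod p) (b : ℤ)
    (hG : ∀ Y, G Y ≠ Y)
    (h : ∀ Y Z : ℤ, b ≤ Z - Y → (Z : ZMod p) ≠ Y → G Y ≠ Z → κ Z = Y ∨ κ Z = G Y) :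
    ∃ s : ZMod p, (∀ Y : ℤ, (Y : ZMod p) ≠ s → G Y = s) ∧
      (∀ Z : ℤ, (Z : ZMod p) ≠ s → κ Z = s) := by
  have inter : ∀ Y1 Y2 : ℤ, (Y1 : ZMod p) ≠ Y2 → G Y1 = G Y2 ∨ G Y1 = Y2 ∨ G Y2 = Y1 := by
    intro Y1 Y2 hne
    obtain ⟨z, h1, h2, h3, h4⟩ := exists_avoid hp (Y1 : ZMod p) Y2 (G Y1) (G Y2)
    obtain ⟨Z, hZ, rfl⟩ := exists_large z (b + |Y1| + |Y2|)
    have e1 := h Y1 Z (by linarith [le_abs_self Y1, abs_nonneg Y2]) h1 h3.symm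
    have e2 := h Y2 Z (by linarith [le_abs_self Y2, abs_nonneg Y1]) h2 h4.symm
    grind
  have key : ∃ s : ZMod p, ∀ Y : ℤ, (Y : ZMod p) ≠ s → G Y = s := by
    set a := G 0 with ha
    have hab : a ≠ 0 := by simpa using hG 0
    obtain ⟨y1, h11, h12, -, -⟩ := exists_avoid hp a 0 0 0
    obtain ⟨y2, h21, h22, h23, -⟩ := exists_avoid hp a 0 y1 0
    obtain ⟨Y1, -, rfl⟩ := exists_large y1 0
    obtain ⟨Y2, -, rfl⟩ := exists_large y2 0
    have out : ∀ Y : ℤ, (Y : ZMod p) ≠ a → (Y : ZMod p) ≠ 0 → G Y = a ∨ G Y = 0 := by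
      intro Y h1 h2
      have := inter 0 Y (by simpa using h2.symm)
      simp only [Int.cast_zero] at this
      grind
    have same : ∀ Y Y' : ℤ, (Y : ZMod p) ≠ a → (Y : ZMod p) ≠ 0 → (Y' : ZMod p) ≠ a →
        (Y' : ZMod p) ≠ 0 → (Y : ZMod p) ≠ Y' → G Y = G Y' := by
      intro Y Y' h1 h2 h3 h4 h5
      have := inter Y Y' h5
      have := out Y h1 h2
      have := out Y' h3 h4
      grind
    refine ⟨G Y1, ?_⟩
    have h12' := same Y1 Y2 h11 h12 h21 h22 (Ne.symm h23)
    have all : ∀ Y : ℤ, (Y : ZMod p) ≠ a → (Y : ZMod p) ≠ 0 → G Y = G Y1 := by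
      intro Y h1 h2
      by_cases h3 : (Y : ZMod p) = Y1
      · rw [h12']
        exact same Y Y2 h1 h2 h21 h22 (by rw [h3]; exact Ne.symm h23)
      · exact same Y Y1 h1 h2 h11 h12 h3
    intro Y hY
    by_cases h1 : (Y : ZMod p) = a ∨ (Y : ZMod p) = 0
    · have n1 : (Y : ZMod p) ≠ Y1 := by grind
      have n2 : (Y : ZMod p) ≠ Y2 := by grind
      have := inter Y Y1 n1
      have := inter Y Y2 n2
      grind
    · push Not at h1
      exact all Y h1.1 h1.2
  obtain ⟨s, hs⟩ := key
  refine ⟨s, hs, ?_⟩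
  intro Z hZ
  obtain ⟨y1, h11, h12, -, -⟩ := exists_avoid hp s (Z : ZMod p) 0 0
  obtain ⟨y2, h21, h22, h23, -⟩ := exists_avoid hp s (Z : ZMod p) y1 0
  obtain ⟨Y1, hY1, rfl⟩ := exists_small y1 (Z - b)
  obtain ⟨Y2, hY2, rfl⟩ := exists_small y2 (Z - b)
  have e1 := h Y1 Z (by linarith) h12.symm (by rw [hs Y1 h11]; exact hZ.symm)
  have e2 := h Y2 Z (by linarith) h22.symm (by rw [hs Y2 h21]; exact hZ.symm)
  rw [hs Y1 h11] at e1
  rw [hs Y2 h21] at e2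
  grind

theorem ap_zero {p : ℕ} [Fact p.Prime] (hp : 5 ≤ p) (e : ZMod p)
    (h : ∀ a b : ZMod p, a ≠ 0 → b ≠ 0 → 2 * b - a - e ≠ 0 →
      (2 * b = a + (2 * b - a - e) ∨ (2 * b - a - e) = 2 * b ∨ a = - (2 * b - a - e) ∨ a = 2 * b)) :
    e = 0 := by
  by_contra he
  have two : (2 : ZMod p) ≠ 0 := by
    intro h2
    have : ((2 : ℕ) : ZMod p) = 0 := by exact_mod_cast h2
    rw [ZMod.natCast_eq_zero_iff] at this
    exact absurd (Nat.le_of_dvd (by norm_num) this) (by omega)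
  obtain ⟨c, h1, h2, -, -⟩ := exists_avoid hp 0 e 0 0
  obtain ⟨a, h3, h4, h5, h6⟩ := exists_avoid hp 0 (-e) c (c - e)
  have hc : 2 * (c / 2) = c := by field_simp
  have := h a (c / 2) h3 (by simp [h1, two]) (by rw [hc]; grind)
  rw [hc] at this
  grind

theorem struct_shift {p K : ℕ} [Fact p.Prime] {r u : ℕ → ℤ → ZMod p} {k : ℕ} {A B A' B' : ℤ}
    (hk : 1 ≤ k) (h : Struct p K r u k A B) (hA : (p : ℤ) ^ k ∣ A' - A) (hB : (p : ℤ) ^ k ∣ B' - B) :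
    Struct p K r u k A' B' := by
  obtain ⟨a, ha⟩ := hA
  obtain ⟨b, hb⟩ := hB
  have hA' : A' = A + p ^ k * a := by linarith
  have hB' : B' = B + p ^ k * b := by linarith
  subst hA' hB'
  obtain ⟨k, rfl⟩ : ∃ k', k = k' + 1 := ⟨k - 1, by omega⟩
  refine ⟨?_, ?_⟩
  · intro v hv m
    rw [h.1 v hv m]
    push_cast
    simp [pow_succ]
  · intro v hv m j hj c hc hc0
    have e : (p : ℤ) ^ (k + 1) = p ^ j * (p * p ^ (k - j)) := by
      rw [← pow_succ', ← pow_add]; congr 1; omega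
    have := h.2 v hv m j hj (c - p * p ^ (k - j) * (a + v * b)) (by
      rw [e] at hc; linear_combination hc) (by push_cast; simpa using hc0)
    rw [this]; push_cast; simp

theorem struct_step {p K : ℕ} [Fact p.Prime] (hp : 5 ≤ p) (hK : 2 * p ≤ K + 1)
    {r u : ℕ → ℤ → ZMod p}
    (hR : ∀ m d : ℤ, 0 ≤ d → SkelRule p K (fun v => r v (m + v * d)) (fun v => u v (m + v * d)))
    {k : ℕ} {A B : ℤ} (h : Struct p K r u (k + 1) A B) :
    ∃ A' B', Struct p K r u (k + 2) A' B' := by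
  have ppos : (0 : ℤ) < p := by exact_mod_cast (Fact.out : p.Prime).pos
  have hpz : ∀ j : ℕ, 0 < j → j < p → (j : ZMod p) ≠ 0 := by
    intro j h0 h1 h2
    rw [ZMod.natCast_eq_zero_iff] at h2
    exact absurd (Nat.le_of_dvd h0 h2) (by omega)
  set g : ℕ → ℤ → ZMod p := fun v W => u v (W - A - v * B) with hg
  have hR' : ∀ X D : ℤ, B ≤ D →
      SkelRule p K (fun v => r v (X - A + v * (D - B))) (fun v => g v (X + v * D)) := by
    intro X D hD
    have := hR (X - A) (D - B) (by linarith)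
    convert this using 3
    ring
  have hP : ∀ v ≤ K, ∀ j ≤ k, ∀ c : ℤ, (c : ZMod p) ≠ 0 → g v ((p : ℤ) ^ j * c) = c := by
    intro v hv j hj c hc
    exact h.2 v hv _ j (by omega) c (by ring) hc
  set hh : ℕ → ℤ → ZMod p := fun v Y => g v ((p : ℤ) ^ (k + 1) * Y) with hhh
  have hh0 : ∀ v ≤ K, ∀ Y, hh v Y ≠ 0 := by
    intro v hv Y
    have := (hR' ((p : ℤ) ^ (k + 1) * Y - v * B) B le_rfl).1 v hv
    simpa [hhh] using this
  have big : ∀ (i : ℕ) (D : ℤ), |B| ≤ D → B ≤ (p : ℤ) ^ i * D := by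
    intro i D hD
    have h1 : (1 : ℤ) ≤ (p : ℤ) ^ i := one_le_pow₀ (by linarith)
    nlinarith [le_abs_self B, abs_nonneg B]
  have hstar : ∀ v, v + p ≤ K → ∃ s : ZMod p, (∀ Y : ℤ, (Y : ZMod p) ≠ s → hh v Y = Y - s) ∧
      (∀ Y : ℤ, (Y : ZMod p) ≠ s → hh (v + p) Y = Y - s) := by
    intro v hv
    obtain ⟨s, h1, h2⟩ := star hp (fun Y => (Y : ZMod p) - hh v Y)
      (fun Y => (Y : ZMod p) - hh (v + p) Y) |B| (by
        intro Y hY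
        exact hh0 v (by omega) Y (by simpa using hY)) (by
        intro Y Z hZY hne hG
        have hD0 : ((Z - Y : ℤ) : ZMod p) ≠ 0 := by
          push_cast; exact sub_ne_zero.2 hne
        have R := (hR' ((p : ℤ) ^ (k + 1) * Y - v * ((p : ℤ) ^ k * (Z - Y))) ((p : ℤ) ^ k * (Z - Y))
          (big _ _ hZY)).2.2.2.2 v hv
        have val : ∀ j : ℕ, 0 < j → j < p → v + j ≤ K →
            g (v + j) ((p : ℤ) ^ (k + 1) * Y - v * ((p : ℤ) ^ k * (Z - Y)) +
              ((v + j : ℕ) : ℤ) * ((p : ℤ) ^ k * (Z - Y))) = j * ((Z : ZMod p) - Y) := by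
          intro j hj0 hj1 hjK
          have e := hP (v + j) hjK k le_rfl (p * Y + j * (Z - Y)) (by
            push_cast
            simp only [CharP.cast_eq_zero, zero_mul, zero_add]
            exact mul_ne_zero (hpz j hj0 hj1) (sub_ne_zero.2 hne))
          rw [show (p : ℤ) ^ (k + 1) * Y - v * ((p : ℤ) ^ k * (Z - Y)) +
              ((v + j : ℕ) : ℤ) * ((p : ℤ) ^ k * (Z - Y)) = (p : ℤ) ^ k * (p * Y + j * (Z - Y)) by
                push_cast; ring, e]
          push_cast; simp
        have v1 := val 1 (by omega) (by omega) (by omega)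
        have v2 := val 2 (by omega) (by omega) (by omega)
        have v3 := val 3 (by omega) (by omega) (by omega)
        have v0 : g v ((p : ℤ) ^ (k + 1) * Y - v * ((p : ℤ) ^ k * (Z - Y)) +
              (v : ℤ) * ((p : ℤ) ^ k * (Z - Y))) = hh v Y := by
          simp only [hhh]; congr 1; ring
        have vp : g (v + p) ((p : ℤ) ^ (k + 1) * Y - v * ((p : ℤ) ^ k * (Z - Y)) +
              ((v + p : ℕ) : ℤ) * ((p : ℤ) ^ k * (Z - Y))) = hh (v + p) Z := by
          simp only [hhh]; congr 1; push_cast; ring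
        simp only [v1, v2, v3, v0, vp] at R
        have R' := R (by push_cast; ring) (by push_cast; ring)
        push_cast at R'
        grind)
    refine ⟨s, fun Y hY => ?_, fun Y hY => ?_⟩
    · have := h1 Y hY; linear_combination -this
    · have := h2 Y hY; linear_combination -this
  have hs : ∀ v, ∃ s : ZMod p, v ≤ K → ∀ Y : ℤ, (Y : ZMod p) ≠ s → hh v Y = Y - s := by
    intro v
    by_cases hv : v + p ≤ K
    · obtain ⟨s, h1, -⟩ := hstar v hv
      exact ⟨s, fun _ => h1⟩
    · by_cases hv' : v ≤ K
      · obtain ⟨s, -, h1⟩ := hstar (v - p) (by omega)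
        rw [show v - p + p = v by omega] at h1
        exact ⟨s, fun _ => h1⟩
      · exact ⟨0, fun h => absurd h hv'⟩
  choose s hs using hs
  have hap : ∀ v, v + 2 ≤ K → s (v + 2) = 2 * s (v + 1) - s v := by
    intro v hv
    have : s v - 2 * s (v + 1) + s (v + 2) = 0 := by
      refine ap_zero hp _ ?_
      intro a b ha hb hc
      -- choose X', D'
      obtain ⟨D, hD, hD'⟩ := exists_large (b + s (v + 1) - (a + s v)) |B|
      obtain ⟨Y, -, hY⟩ := exists_large (a + s v) 0
      have R := (hR' ((p : ℤ) ^ (k + 1) * Y - v * ((p : ℤ) ^ (k + 1) * D)) ((p : ℤ) ^ (k + 1) * D)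
          (big _ _ hD)).2.2.2.1 v hv
      have v0 : g v ((p : ℤ) ^ (k + 1) * Y - v * ((p : ℤ) ^ (k + 1) * D) +
              (v : ℤ) * ((p : ℤ) ^ (k + 1) * D)) = a := by
        have := hs v (by omega) Y (by rw [hY]; simpa using ha)
        rw [hY] at this
        simp only [hhh] at this
        rw [show (p : ℤ) ^ (k + 1) * Y - v * ((p : ℤ) ^ (k + 1) * D) +
              (v : ℤ) * ((p : ℤ) ^ (k + 1) * D) = (p : ℤ) ^ (k + 1) * Y by ring, this]
        ring
      have e1 : ((Y + D : ℤ) : ZMod p) = b + s (v + 1) := by push_cast; rw [hY, hD']; ring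
      have v1 : g (v + 1) ((p : ℤ) ^ (k + 1) * Y - v * ((p : ℤ) ^ (k + 1) * D) +
              ((v + 1 : ℕ) : ℤ) * ((p : ℤ) ^ (k + 1) * D)) = b := by
        have := hs (v + 1) (by omega) (Y + D) (by rw [e1]; simpa using hb)
        rw [e1] at this
        simp only [hhh] at this
        rw [show (p : ℤ) ^ (k + 1) * Y - v * ((p : ℤ) ^ (k + 1) * D) +
              ((v + 1 : ℕ) : ℤ) * ((p : ℤ) ^ (k + 1) * D) = (p : ℤ) ^ (k + 1) * (Y + D) by
                push_cast; ring, this]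
        ring
      have e2 : ((Y + 2 * D : ℤ) : ZMod p) =
          2 * b - a - (s v - 2 * s (v + 1) + s (v + 2)) + s (v + 2) := by
        push_cast; rw [hY, hD']; ring
      have v2 : g (v + 2) ((p : ℤ) ^ (k + 1) * Y - v * ((p : ℤ) ^ (k + 1) * D) +
              ((v + 2 : ℕ) : ℤ) * ((p : ℤ) ^ (k + 1) * D)) =
              2 * b - a - (s v - 2 * s (v + 1) + s (v + 2)) := by
        have := hs (v + 2) (by omega) (Y + 2 * D) (by rw [e2]; simpa using hc)
        rw [e2] at this
        simp only [hhh] at this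
        rw [show (p : ℤ) ^ (k + 1) * Y - v * ((p : ℤ) ^ (k + 1) * D) +
              ((v + 2 : ℕ) : ℤ) * ((p : ℤ) ^ (k + 1) * D) = (p : ℤ) ^ (k + 1) * (Y + 2 * D) by
                push_cast; ring, this]
        ring
      simp only [v0, v1, v2] at R
      exact R
    linear_combination this
  have hlin : ∀ v, v ≤ K → s v = s 0 + v * (s 1 - s 0) := by
    intro v
    induction v using Nat.strong_induction_on with
    | _ v ih =>
      intro hv
      match v, ih, hv with
      | 0, _, _ => simp
      | 1, _, _ => simp
      | w + 2, ih, hv =>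
        rw [hap w hv, ih (w + 1) (by omega) (by omega), ih w (by omega) (by omega)]
        push_cast; ring
  obtain ⟨a, -, ha⟩ := exists_large (s 0) 0
  obtain ⟨b, -, hb⟩ := exists_large (s 1 - s 0) 0
  have hsh : Struct p K r u (k + 1) (A - p ^ (k + 1) * a) (B - p ^ (k + 1) * b) :=
    struct_shift (by omega) h ⟨-a, by ring⟩ ⟨-b, by ring⟩
  refine ⟨_, _, hsh.1, ?_⟩
  intro v hv m j hj c hc hc0
  by_cases hjk : j < k + 1
  · exact hsh.2 v hv m j hjk c hc hc0
  · obtain rfl : j = k + 1 := by omega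
    have e : ((c + a + v * b : ℤ) : ZMod p) = c + s v := by
      push_cast; rw [ha, hb, hlin v hv]; ring
    have := hs v hv (c + a + v * b) (by rw [e]; simpa using hc0)
    rw [e] at this
    simp only [hhh, hg] at this
    rw [show m = (p : ℤ) ^ (k + 1) * (c + a + v * b) - A - v * B by linear_combination hc, this]
    ring

theorem struct_exists {p K : ℕ} [Fact p.Prime] (hp : 5 ≤ p) (hK : 2 * p ≤ K + 1)
    {r u : ℕ → ℤ → ZMod p} (hadj : ∀ v ≤ K, ∀ m, r v (m + 1) = r v m + 1)
    (hR : ∀ m d : ℤ, 0 ≤ d → SkelRule p K (fun v => r v (m + v * d)) (fun v => u v (m + v * d)))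
    (k : ℕ) : ∃ A B, Struct p K r u (k + 1) A B := by
  induction k with
  | succ k ih =>
    obtain ⟨A, B, h⟩ := ih
    exact struct_step hp hK hR h
  | zero =>
    obtain ⟨a, -, ha⟩ := exists_large (r 0 0) 0
    obtain ⟨b, -, hb⟩ := exists_large (r 1 0 - r 0 0) 0
    have hr : ∀ v ≤ K, ∀ m, r v m = r v 0 + m := by
      intro v hv m
      induction m using Int.induction_on with
      | zero => simp
      | succ i ih => rw [hadj v hv, ih]; push_cast; ring
      | pred i ih =>
        have := hadj v hv (-(i : ℤ) - 1)
        rw [sub_add_cancel] at this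
        rw [ih] at this
        push_cast at this ⊢
        linear_combination -this
    have h0 := hR 0 0 le_rfl
    have hlin : ∀ v, v ≤ K → r v 0 = r 0 0 + v * (r 1 0 - r 0 0) := by
      intro v
      induction v using Nat.strong_induction_on with
      | _ v ih =>
        intro hv
        match v, ih, hv with
        | 0, _, _ => simp
        | 1, _, _ => simp
        | w + 2, ih, hv =>
          have := h0.2.2.1 w hv
          simp only [mul_zero, add_zero] at this
          rw [this, ih (w + 1) (by omega) (by omega), ih w (by omega) (by omega)]
          push_cast; ring
    have h1 : ∀ v ≤ K, ∀ m : ℤ, r v m = ((m + a + v * b : ℤ) : ZMod p) := by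
      intro v hv m
      rw [hr v hv, hlin v hv]; push_cast; rw [ha, hb]; ring
    refine ⟨a, b, h1, ?_⟩
    intro v hv m j hj c hc hc0
    obtain rfl : j = 0 := by omega
    rw [pow_zero, one_mul] at hc
    have h2 := h1 v hv m
    rw [hc] at h2
    have := (hR m 0 le_rfl).2.1 v hv
    simp only [mul_zero, add_zero] at this
    rw [this (by rw [h2]; exact hc0), h2]

end AND

namespace AND

/-- Detection of a base point that is more divisible than the difference. -/
def Base {p : ℕ} (u : ℕ → ZMod p) : Prop := u 2 = 2 * u 1 ∧ u 3 = 3 * u 1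

/-- The constraints on the tile layer along an arithmetic progression of tracks. -/
def TRule {Tl : Type} (V H : Tl → Tl → Prop) (seed : Tl → Prop) (p q K : ℕ)
    (r1 u1 : ℕ → ZMod p) (r2 u2 : ℕ → ZMod q) (T : ℕ → Tl) : Prop :=
  ((∀ v ≤ K, u1 v = u1 0) → (∀ v ≤ K, u2 v = u2 0) → ∀ v ≤ K, T v = T 0) ∧
  (Base u1 → Base u2 → u1 p = u1 1 → u1 (2 * p) = 2 * u1 1 → V (T 1) (T p)) ∧
  (Base u1 → Base u2 → u2 q = u2 1 → u2 (2 * q) = 2 * u2 1 → H (T 1) (T q)) ∧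
  (r1 1 ≠ 0 → r2 1 ≠ 0 → seed (T 1))

theorem crt {p q : ℕ} [Fact p.Prime] [Fact q.Prime] (hpq : p ≠ q) (k : ℕ) (a b : ℤ) :
    ∃ c : ℤ, (p : ℤ) ^ k ∣ c - a ∧ (q : ℤ) ^ k ∣ c - b := by
  have h : IsCoprime ((p : ℤ) ^ k) ((q : ℤ) ^ k) := by
    apply IsCoprime.pow
    exact Nat.isCoprime_iff_coprime.2 ((Nat.coprime_primes Fact.out Fact.out).2 hpq)
  obtain ⟨x, y, hxy⟩ := h
  refine ⟨a * (y * q ^ k) + b * (x * p ^ k), ⟨(b - a) * x, ?_⟩, ⟨(a - b) * y, ?_⟩⟩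
  · linear_combination a * hxy
  · linear_combination b * hxy

/-- Value of the skeleton at points congruent to `j • p^τ q^σ`. -/
theorem tile_extract {Tl : Type} (V H : Tl → Tl → Prop) (seed : Tl → Prop) {p q K : ℕ}
    [Fact p.Prime] [Fact q.Prime] (hpq : p ≠ q) (hp : 5 ≤ p) (hq : 5 ≤ q)
    (hpK : 2 * p ≤ K) (hqK : 2 * q ≤ K)
    (r1 u1 : ℕ → ℤ → ZMod p) (r2 u2 : ℕ → ℤ → ZMod q) (T : ℕ → ℤ → Tl)
    (hadj1 : ∀ v ≤ K, ∀ m, r1 v (m + 1) = r1 v m + 1)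
    (hadj2 : ∀ v ≤ K, ∀ m, r2 v (m + 1) = r2 v m + 1)
    (hR1 : ∀ m d : ℤ, 0 ≤ d → SkelRule p K (fun v => r1 v (m + v * d)) (fun v => u1 v (m + v * d)))
    (hR2 : ∀ m d : ℤ, 0 ≤ d → SkelRule q K (fun v => r2 v (m + v * d)) (fun v => u2 v (m + v * d)))
    (hT : ∀ m d : ℤ, 0 ≤ d → TRule V H seed p q K (fun v => r1 v (m + v * d))
      (fun v => u1 v (m + v * d)) (fun v => r2 v (m + v * d)) (fun v => u2 v (m + v * d))
      (fun v => T v (m + v * d))) (k : ℕ) :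
    ∃ tile : ℕ → ℕ → Tl, seed (tile 0 0) ∧ ∀ τ < k, ∀ σ < k,
      V (tile τ σ) (tile (τ + 1) σ) ∧ H (tile τ σ) (tile τ (σ + 1)) := by
  obtain ⟨A1, B1, h1⟩ := struct_exists hp (by omega) hadj1 hR1 k
  obtain ⟨A2, B2, h2⟩ := struct_exists hq (by omega) hadj2 hR2 k
  obtain ⟨A, hA1, hA2⟩ := crt hpq (k + 1) A1 A2
  obtain ⟨B, hB1, hB2⟩ := crt hpq (k + 1) B1 B2
  replace h1 := struct_shift (by omega) h1 hA1 hB1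
  replace h2 := struct_shift (by omega) h2 hA2 hB2
  have hpz : ∀ j : ℕ, 0 < j → j < p → (j : ZMod p) ≠ 0 := by
    intro j h0 h1 h2
    rw [ZMod.natCast_eq_zero_iff] at h2
    exact absurd (Nat.le_of_dvd h0 h2) (by omega)
  have hqz : ∀ j : ℕ, 0 < j → j < q → (j : ZMod q) ≠ 0 := by
    intro j h0 h1 h2
    rw [ZMod.natCast_eq_zero_iff] at h2
    exact absurd (Nat.le_of_dvd h0 h2) (by omega)
  have hpq0 : (p : ZMod q) ≠ 0 := by
    rw [Ne, ZMod.natCast_eq_zero_iff, Nat.prime_dvd_prime_iff_eq Fact.out Fact.out]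
    exact hpq.symm
  have hqp0 : (q : ZMod p) ≠ 0 := by
    rw [Ne, ZMod.natCast_eq_zero_iff, Nat.prime_dvd_prime_iff_eq Fact.out Fact.out]
    exact hpq
  set N : ℤ := (p : ℤ) ^ (k + 1) * (q : ℤ) ^ (k + 1) with hN
  have hNpos : 1 ≤ N := by
    have a1 : (1 : ℤ) ≤ (p : ℤ) ^ (k + 1) := one_le_pow₀ (by omega)
    have a2 : (1 : ℤ) ≤ (q : ℤ) ^ (k + 1) := one_le_pow₀ (by omega)
    nlinarith
  set T' : ℕ → ℤ → Tl := fun v W => T v (W - A - v * B) with hT'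
  -- values of u1, u2
  have val1 : ∀ v ≤ K, ∀ (τ σ j : ℕ) (n : ℤ), τ ≤ k → 0 < j → j < p →
      u1 v ((j : ℤ) * ((p : ℤ) ^ τ * (q : ℤ) ^ σ) + N * n - A - v * B) = j * (q : ZMod p) ^ σ := by
    intro v hv τ σ j n hτ hj hj'
    have e : (p : ℤ) ^ (k + 1) = p ^ τ * (p * p ^ (k - τ)) := by
      rw [← pow_succ', ← pow_add]; congr 1; omega
    have := h1.2 v hv ((j : ℤ) * ((p : ℤ) ^ τ * (q : ℤ) ^ σ) + N * n - A - v * B) τ (by omega)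
      (j * (q : ℤ) ^ σ + (p * p ^ (k - τ)) * (q : ℤ) ^ (k + 1) * n) (by rw [hN, e]; ring)
      (by
        push_cast
        simp only [CharP.cast_eq_zero, zero_mul, add_zero]
        exact mul_ne_zero (hpz j hj hj') (pow_ne_zero _ hqp0))
    rw [this]
    push_cast
    simp
  have val2 : ∀ v ≤ K, ∀ (τ σ j : ℕ) (n : ℤ), σ ≤ k → 0 < j → j < q →
      u2 v ((j : ℤ) * ((p : ℤ) ^ τ * (q : ℤ) ^ σ) + N * n - A - v * B) = j * (p : ZMod q) ^ τ := by
    intro v hv τ σ j n hτ hj hj'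
    have e : (q : ℤ) ^ (k + 1) = q ^ σ * (q * q ^ (k - σ)) := by
      rw [← pow_succ', ← pow_add]; congr 1; omega
    have := h2.2 v hv ((j : ℤ) * ((p : ℤ) ^ τ * (q : ℤ) ^ σ) + N * n - A - v * B) σ (by omega)
      (j * (p : ℤ) ^ τ + (q * q ^ (k - σ)) * (p : ℤ) ^ (k + 1) * n) (by rw [hN, e]; ring)
      (by
        push_cast
        simp only [CharP.cast_eq_zero, zero_mul, add_zero]
        exact mul_ne_zero (hqz j hj hj') (pow_ne_zero _ hpq0))
    rw [this]
    push_cast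
    simp
  have hT2 : ∀ X D : ℤ, B ≤ D → TRule V H seed p q K
      (fun v => r1 v (X + v * D - A - v * B)) (fun v => u1 v (X + v * D - A - v * B))
      (fun v => r2 v (X + v * D - A - v * B)) (fun v => u2 v (X + v * D - A - v * B))
      (fun v => T' v (X + v * D)) := by
    intro X D hD
    have := hT (X - A) (D - B) (by linarith)
    have e : ∀ v : ℕ, X - A + v * (D - B) = X + v * D - A - v * B := fun v => by ring
    simp only [e] at this
    exact this
  have big : B ≤ N * |B| := by nlinarith [le_abs_self B, abs_nonneg B]
  -- constancy
  have con0 : ∀ (τ σ : ℕ) (n t : ℤ), τ ≤ k → σ ≤ k → B ≤ N * t → ∀ v ≤ K,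
      T' v ((p : ℤ) ^ τ * (q : ℤ) ^ σ + N * n + v * (N * t)) =
      T' 0 ((p : ℤ) ^ τ * (q : ℤ) ^ σ + N * n) := by
    intro τ σ n t hτ hσ ht v hv
    have R := (hT2 ((p : ℤ) ^ τ * (q : ℤ) ^ σ + N * n) (N * t) ht).1
    have a1 : ∀ v ≤ K, u1 v ((p : ℤ) ^ τ * (q : ℤ) ^ σ + N * n + v * (N * t) - A - v * B)
        = (q : ZMod p) ^ σ := by
      intro v hv
      have := val1 v hv τ σ 1 (n + v * t) hτ (by omega) (by omega)
      rw [← one_mul ((q : ZMod p) ^ σ)]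
      convert this using 2
      · push_cast; ring
      · simp
    have a2 : ∀ v ≤ K, u2 v ((p : ℤ) ^ τ * (q : ℤ) ^ σ + N * n + v * (N * t) - A - v * B)
        = (p : ZMod q) ^ τ := by
      intro v hv
      have := val2 v hv τ σ 1 (n + v * t) hσ (by omega) (by omega)
      rw [← one_mul ((p : ZMod q) ^ τ)]
      convert this using 2
      · push_cast; ring
      · simp
    have := R (fun v hv => (a1 v hv).trans (a1 0 (by omega)).symm)
      (fun v hv => (a2 v hv).trans (a2 0 (by omega)).symm) v hv
    simpa using this
  have con : ∀ (τ σ : ℕ) (n : ℤ), τ ≤ k → σ ≤ k → ∀ v ≤ K, 1 ≤ v →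
      T' v ((p : ℤ) ^ τ * (q : ℤ) ^ σ + N * n) = T' 1 ((p : ℤ) ^ τ * (q : ℤ) ^ σ) := by
    intro τ σ n hτ hσ v hv hv1
    have d1 := con0 τ σ (n - v * (|B| + |n|+ |n|)) (|B| + |n| + |n|) hτ hσ
      (by nlinarith [le_abs_self B, abs_nonneg B, abs_nonneg n]) v hv
    have d2 : B ≤ N * (v * (|B| + |n| + |n|) - n) := by
      have h0 : (1 : ℤ) ≤ v := by exact_mod_cast hv1
      have h1 : |B| ≤ (v : ℤ) * (|B| + |n| + |n|) - n := by
        nlinarith [le_abs_self n, abs_nonneg n, abs_nonneg B]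
      nlinarith [le_abs_self B, abs_nonneg B]
    have d3 := con0 τ σ (n - v * (|B| + |n|+ |n|)) _ hτ hσ d2 1 (by omega)
    rw [← d1] at d3
    rw [show (p : ℤ) ^ τ * (q : ℤ) ^ σ + N * n = (p : ℤ) ^ τ * (q : ℤ) ^ σ +
      N * (n - v * (|B| + |n|+ |n|)) + v * (N * (|B| + |n| + |n|)) by ring, ← d3]
    congr 1
    push_cast
    ring
  have hD : ∀ τ σ : ℕ, B ≤ (p : ℤ) ^ τ * (q : ℤ) ^ σ + N * |B| := by
    intro τ σ
    have : (0 : ℤ) ≤ (p : ℤ) ^ τ * (q : ℤ) ^ σ := by positivity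
    linarith
  -- values along the progression through `p^τ q^σ`
  have w1 : ∀ (τ σ j v : ℕ), τ ≤ k → 0 < j → j < p → ∀ (ρ σ' : ℕ), v ≤ K →
      v * (p ^ τ * q ^ σ') = j * (p ^ ρ * q ^ σ) → ρ ≤ k →
      u1 v (-(N * |B|) + v * ((p : ℤ) ^ τ * (q : ℤ) ^ σ' + N * |B|) - A - v * B)
        = j * (q : ZMod p) ^ σ := by
    intro τ σ j v hτ hj hj' ρ σ' hv he hρ
    have he' : (v : ℤ) * ((p : ℤ) ^ τ * (q : ℤ) ^ σ') = j * ((p : ℤ) ^ ρ * (q : ℤ) ^ σ) := by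
      exact_mod_cast he
    rw [← val1 v hv ρ σ j ((v - 1) * |B|) hρ hj hj', ← he']
    congr 1
    ring
  have w2 : ∀ (τ σ j v : ℕ), 0 < j → j < q → ∀ (ρ τ' : ℕ), v ≤ K →
      v * (p ^ τ' * q ^ σ) = j * (p ^ τ * q ^ ρ) → ρ ≤ k →
      u2 v (-(N * |B|) + v * ((p : ℤ) ^ τ' * (q : ℤ) ^ σ + N * |B|) - A - v * B)
        = j * (p : ZMod q) ^ τ := by
    intro τ σ j v hj hj' ρ τ' hv he hρ
    have he' : (v : ℤ) * ((p : ℤ) ^ τ' * (q : ℤ) ^ σ) = j * ((p : ℤ) ^ τ * (q : ℤ) ^ ρ) := by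
      exact_mod_cast he
    rw [← val2 v hv τ ρ j ((v - 1) * |B|) hρ hj hj', ← he']
    congr 1
    ring
  have b1 : ∀ τ σ : ℕ, τ < k → Base (fun v : ℕ =>
      u1 v (-(N * |B|) + v * ((p : ℤ) ^ τ * (q : ℤ) ^ σ + N * |B|) - A - v * B)) := by
    intro τ σ hτ
    have x1 := w1 τ σ 1 1 (by omega) (by omega) (by omega) τ σ (by omega) rfl (by omega)
    have x2 := w1 τ σ 2 2 (by omega) (by omega) (by omega) τ σ (by omega) rfl (by omega)
    have x3 := w1 τ σ 3 3 (by omega) (by omega) (by omega) τ σ (by omega) rfl (by omega)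
    refine ⟨?_, ?_⟩
    · refine x2.trans ?_
      beta_reduce
      rw [x1]
      push_cast; ring
    · refine x3.trans ?_
      beta_reduce
      rw [x1]
      push_cast; ring
  have b2 : ∀ τ σ : ℕ, σ < k → Base (fun v : ℕ =>
      u2 v (-(N * |B|) + v * ((p : ℤ) ^ τ * (q : ℤ) ^ σ + N * |B|) - A - v * B)) := by
    intro τ σ hσ
    have x1 := w2 τ σ 1 1 (by omega) (by omega) σ τ (by omega) rfl (by omega)
    have x2 := w2 τ σ 2 2 (by omega) (by omega) σ τ (by omega) rfl (by omega)
    have x3 := w2 τ σ 3 3 (by omega) (by omega) σ τ (by omega) rfl (by omega)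
    refine ⟨?_, ?_⟩
    · refine x2.trans ?_
      beta_reduce
      rw [x1]
      push_cast; ring
    · refine x3.trans ?_
      beta_reduce
      rw [x1]
      push_cast; ring
  refine ⟨fun τ σ => T' 1 ((p : ℤ) ^ τ * (q : ℤ) ^ σ), ?_, ?_⟩
  · have R := (hT2 (-(N * |B|)) ((p : ℤ) ^ 0 * (q : ℤ) ^ 0 + N * |B|) (hD 0 0)).2.2.2
    have := R ?_ ?_
    · simpa using this
    · simp only [h1.1 1 (by omega)]
      rw [show -(N * |B|) + (1 : ℕ) * ((p : ℤ) ^ 0 * (q : ℤ) ^ 0 + N * |B|) - A - (1 : ℕ) * B + A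
        + (1 : ℕ) * B = 1 by push_cast; ring]
      simp
    · simp only [h2.1 1 (by omega)]
      rw [show -(N * |B|) + (1 : ℕ) * ((p : ℤ) ^ 0 * (q : ℤ) ^ 0 + N * |B|) - A - (1 : ℕ) * B + A
        + (1 : ℕ) * B = 1 by push_cast; ring]
      simp
  · intro τ hτ σ hσ
    have R := hT2 (-(N * |B|)) ((p : ℤ) ^ τ * (q : ℤ) ^ σ + N * |B|) (hD τ σ)
    refine ⟨?_, ?_⟩
    · have := R.2.1 (b1 τ σ hτ) (b2 τ σ hσ)
        (by
          refine (w1 τ σ 1 p hτ.le (by omega) (by omega) (τ + 1) σ (by omega) (by ring)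
            (by omega)).trans (w1 τ σ 1 1 hτ.le (by omega) (by omega) τ σ (by omega) rfl
            (by omega)).symm)
        (by
          refine (w1 τ σ 2 (2 * p) hτ.le (by omega) (by omega) (τ + 1) σ (by omega) (by ring)
            (by omega)).trans ?_
          beta_reduce
          rw [w1 τ σ 1 1 hτ.le (by omega) (by omega) τ σ (by omega) rfl (by omega)]
          push_cast; ring)
      have c := con (τ + 1) σ ((p - 1) * |B|) (by omega) (by omega) p (by omega) (by omega)
      beta_reduce
      rw [← c]
      beta_reduce at this
      convert this using 2
      · push_cast; ring
      · push_cast; ring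
    · have := R.2.2.1 (b1 τ σ hτ) (b2 τ σ hσ)
        (by
          refine (w2 τ σ 1 q (by omega) (by omega) (σ + 1) τ (by omega) (by ring)
            (by omega)).trans (w2 τ σ 1 1 (by omega) (by omega) σ τ (by omega) rfl
            (by omega)).symm)
        (by
          refine (w2 τ σ 2 (2 * q) (by omega) (by omega) (σ + 1) τ (by omega) (by ring)
            (by omega)).trans ?_
          beta_reduce
          rw [w2 τ σ 1 1 (by omega) (by omega) σ τ (by omega) rfl (by omega)]
          push_cast; ring)
      have c := con τ (σ + 1) ((q - 1) * |B|) (by omega) (by omega) q (by omega) (by omega)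
      beta_reduce
      rw [← c]
      beta_reduce at this
      convert this using 2
      · push_cast; ring
      · push_cast; ring

end AND

namespace AND

/-- The last nonzero `p`-adic digit. -/
noncomputable def lnz (p : ℕ) (X : ℤ) : ZMod p := ((X / (p : ℤ) ^ padicValInt p X : ℤ) : ZMod p)

section
variable {p : ℕ} [hpF : Fact p.Prime]

theorem val_eq {y : ℤ} {j : ℕ} {c : ℤ} (h : y = (p : ℤ) ^ j * c) (hc : (c : ZMod p) ≠ 0) :
    padicValInt p y = j := by
  have hc0 : c ≠ 0 := by rintro rfl; simp at hc
  have hp0 : ((p : ℤ) ^ j) ≠ 0 := pow_ne_zero _ (by exact_mod_cast hpF.out.ne_zero)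
  rw [h, padicValInt.mul hp0 hc0]
  have e : padicValInt p c = 0 := by
    apply padicValInt.eq_zero_of_not_dvd
    rwa [← ZMod.intCast_zmod_eq_zero_iff_dvd]
  rw [e]
  have : (p : ℤ) ^ j = ((p ^ j : ℕ) : ℤ) := by push_cast; rfl
  rw [this, padicValInt.of_nat, padicValNat.prime_pow]
  rfl

theorem lnz_eq {y : ℤ} {j : ℕ} {c : ℤ} (h : y = (p : ℤ) ^ j * c) (hc : (c : ZMod p) ≠ 0) :
    lnz p y = c := by
  have hp0 : ((p : ℤ) ^ j) ≠ 0 := pow_ne_zero _ (by exact_mod_cast hpF.out.ne_zero)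
  rw [lnz, val_eq h hc, h, Int.mul_ediv_cancel_left _ hp0]

theorem exists_rep {y : ℤ} (hy : y ≠ 0) : ∃ j : ℕ, ∃ c : ℤ, y = (p : ℤ) ^ j * c ∧ (c : ZMod p) ≠ 0 := by
  have hf : FiniteMultiplicity (p : ℤ) y := by
    rw [Int.finiteMultiplicity_iff]
    refine ⟨by simpa using hpF.out.ne_one, hy⟩
  obtain ⟨c, hc, hn⟩ := hf.exists_eq_pow_mul_and_not_dvd
  exact ⟨_, c, hc, by rwa [Ne, ZMod.intCast_zmod_eq_zero_iff_dvd]⟩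

theorem lnz_ne {y : ℤ} (hy : y ≠ 0) : lnz p y ≠ 0 := by
  obtain ⟨j, c, h, hc⟩ := exists_rep (p := p) hy
  rwa [lnz_eq h hc]

theorem lnz_self {y : ℤ} (hy : (y : ZMod p) ≠ 0) : lnz p y = y :=
  lnz_eq (j := 0) (by simp) hy

theorem val_self {y : ℤ} (hy : (y : ZMod p) ≠ 0) : padicValInt p y = 0 :=
  val_eq (j := 0) (by simp) hy

theorem lnz_mul {y : ℤ} (hy : y ≠ 0) (j : ℕ) : lnz p ((p : ℤ) ^ j * y) = lnz p y := by
  obtain ⟨i, c, h, hc⟩ := exists_rep (p := p) hy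
  rw [lnz_eq h hc, lnz_eq (j := j + i) (c := c) (by rw [h]; ring) hc]

theorem val_mul {y : ℤ} (hy : y ≠ 0) (j : ℕ) :
    padicValInt p ((p : ℤ) ^ j * y) = j + padicValInt p y := by
  obtain ⟨i, c, h, hc⟩ := exists_rep (p := p) hy
  rw [val_eq h hc, val_eq (j := j + i) (c := c) (by rw [h]; ring) hc]

theorem exists_rep2 {X D : ℤ} (hD : D ≠ 0) : ∃ j : ℕ, ∃ x d : ℤ, X = (p : ℤ) ^ j * x ∧
    D = (p : ℤ) ^ j * d ∧ ((x : ZMod p) ≠ 0 ∨ (d : ZMod p) ≠ 0) := by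
  obtain ⟨i, d, h, hd⟩ := exists_rep (p := p) hD
  rcases eq_or_ne X 0 with hX | hX
  · exact ⟨i, 0, d, by simp [hX], h, Or.inr hd⟩
  obtain ⟨l, x, h', hx⟩ := exists_rep (p := p) hX
  rcases le_total i l with hil | hil
  · obtain ⟨t, rfl⟩ := Nat.exists_eq_add_of_le hil
    exact ⟨i, p ^ t * x, d, by rw [h']; ring, h, Or.inr hd⟩
  · obtain ⟨t, rfl⟩ := Nat.exists_eq_add_of_le hil
    exact ⟨l, x, p ^ t * d, h', by rw [h]; ring, Or.inl hx⟩

theorem small_ne (hp : 5 ≤ p) : (2 : ZMod p) ≠ 0 ∧ (3 : ZMod p) ≠ 0 := by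
  have hpz : ∀ j : ℕ, 0 < j → j < p → (j : ZMod p) ≠ 0 := by
    intro j h0 h1 h2
    rw [ZMod.natCast_eq_zero_iff] at h2
    exact absurd (Nat.le_of_dvd h0 h2) (by omega)
  exact ⟨by exact_mod_cast hpz 2 (by omega) (by omega), by exact_mod_cast hpz 3 (by omega) (by omega)⟩

theorem base_core (hp : 5 ≤ p) {x d : ℤ} (h : (x : ZMod p) ≠ 0 ∨ (d : ZMod p) ≠ 0)
    (n1 : x + d ≠ 0) (n2 : x + 2 * d ≠ 0) (n3 : x + 3 * d ≠ 0)
    (h2 : lnz p (x + 2 * d) = 2 * lnz p (x + d)) (h3 : lnz p (x + 3 * d) = 3 * lnz p (x + d)) :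
    (x : ZMod p) = 0 ∧ (d : ZMod p) ≠ 0 := by
  obtain ⟨e2, e3⟩ := small_ne hp
  have f1 := lnz_ne (p := p) n1
  by_cases g1 : ((x + d : ℤ) : ZMod p) = 0
  · exfalso
    have hx : (x : ZMod p) = - d := by push_cast at g1; linear_combination g1
    have hd : (d : ZMod p) ≠ 0 := by
      intro h0; simp [h0, hx] at h
    have g2 : ((x + 2 * d : ℤ) : ZMod p) = d := by push_cast; rw [hx]; ring
    have g3 : ((x + 3 * d : ℤ) : ZMod p) = 2 * d := by push_cast; rw [hx]; ring
    rw [lnz_self (by rw [g2]; exact hd), g2] at h2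
    rw [lnz_self (by rw [g3]; exact mul_ne_zero e2 hd), g3, h2] at h3
    apply f1
    linear_combination h3
  rw [lnz_self g1] at h2 h3
  by_cases g2 : ((x + 2 * d : ℤ) : ZMod p) = 0
  · exfalso
    have hx : (x : ZMod p) = - (2 * d) := by push_cast at g2; linear_combination g2
    have hd : (d : ZMod p) ≠ 0 := by
      intro h0; simp [h0, hx] at h
    have g3 : ((x + 3 * d : ℤ) : ZMod p) = d := by push_cast; rw [hx]; ring
    rw [lnz_self (by rw [g3]; exact hd), g3] at h3
    push_cast at h3
    rw [hx] at h3
    have : (2 * 2 * d : ZMod p) = 0 := by linear_combination h3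
    simp [e2, hd] at this
  rw [lnz_self g2] at h2
  push_cast at h2
  have hx : (x : ZMod p) = 0 := by linear_combination -h2
  exact ⟨hx, by tauto⟩

theorem three_core (hp : 5 ≤ p) {x d : ℤ} (h : (x : ZMod p) ≠ 0 ∨ (d : ZMod p) ≠ 0) :
    (2 * lnz p (x + d) = lnz p x + lnz p (x + 2 * d) ∨ lnz p (x + 2 * d) = 2 * lnz p (x + d) ∨
      lnz p x = - lnz p (x + 2 * d) ∨ lnz p x = 2 * lnz p (x + d)) := by
  obtain ⟨e2, e3⟩ := small_ne hp
  by_cases g0 : (x : ZMod p) = 0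
  · have hd : (d : ZMod p) ≠ 0 := by tauto
    rw [lnz_self (y := x + d) (by push_cast; simpa [g0]), lnz_self (y := x + 2 * d)
      (by push_cast; simp [g0, e2, hd])]
    right; left; push_cast; rw [g0]; ring
  by_cases g1 : ((x + d : ℤ) : ZMod p) = 0
  · have hx : (x : ZMod p) = - d := by push_cast at g1; linear_combination g1
    have hd : (d : ZMod p) ≠ 0 := by
      intro h0; simp [h0, hx] at h
    have g2 : ((x + 2 * d : ℤ) : ZMod p) = d := by push_cast; rw [hx]; ring
    rw [lnz_self (y := x) g0, lnz_self (y := x + 2 * d) (by rw [g2]; exact hd), g2, hx]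
    tauto
  rw [lnz_self g0, lnz_self g1]
  by_cases g2 : ((x + 2 * d : ℤ) : ZMod p) = 0
  · have hx : (x : ZMod p) = - (2 * d) := by push_cast at g2; linear_combination g2
    right; right; right; push_cast; rw [hx]; ring
  rw [lnz_self g2]
  left; push_cast; ring

theorem p_core {z d : ℤ} (hd : (d : ZMod p) ≠ 0) :
    (lnz p (z + d) = d ∨ lnz p (z + d) = lnz p z + d ∨ lnz p z = - d) := by
  by_cases g0 : (z : ZMod p) = 0
  · left; rw [lnz_self (by push_cast; simpa [g0])]; push_cast; simp [g0]
  by_cases g1 : ((z + d : ℤ) : ZMod p) = 0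
  · right; right; rw [lnz_self g0]; push_cast at g1; linear_combination g1
  · right; left; rw [lnz_self g0, lnz_self g1]; push_cast; ring

theorem skel_true {K : ℕ} (hp : 5 ≤ p) (h : ZMod p) (hh : h ≠ 0) (X D : ℤ) (hD : D ≠ 0)
    (hne : ∀ v : ℕ, X + v * D ≠ 0) :
    SkelRule p K (fun v => ((X + v * D : ℤ) : ZMod p) * h) (fun v => lnz p (X + v * D) * h) := by
  obtain ⟨j, x, d, rfl, rfl, hxd⟩ := exists_rep2 (p := p) (X := X) hD
  have hne' : ∀ v : ℕ, x + v * d ≠ 0 := fun v h0 => hne v (by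
    linear_combination (p : ℤ) ^ j * h0)
  have red : ∀ v : ℕ, lnz p ((p : ℤ) ^ j * x + v * ((p : ℤ) ^ j * d)) = lnz p (x + v * d) := by
    intro v
    rw [← lnz_mul (hne' v) j]; congr 1; ring
  have hxd' : ∀ v : ℕ, ((x + v * d : ℤ) : ZMod p) ≠ 0 ∨ (d : ZMod p) ≠ 0 := by
    intro v
    by_cases h0 : (d : ZMod p) = 0
    · left; push_cast; rw [h0]; simpa [h0] using hxd
    · exact Or.inr h0
  refine ⟨?_, ?_, ?_, ?_, ?_⟩
  · intro v _
    exact mul_ne_zero (lnz_ne (hne v)) hh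
  · intro v _ h0
    beta_reduce at h0 ⊢
    rw [lnz_self (left_ne_zero_of_mul h0)]
  · intro v _
    push_cast; ring
  · intro v _
    simp only [red]
    have := three_core hp (hxd' v)
    rw [show x + v * d + d = x + ((v + 1 : ℕ) : ℤ) * d by push_cast; ring,
      show x + v * d + 2 * d = x + ((v + 2 : ℕ) : ℤ) * d by push_cast; ring] at this
    rcases this with t | t | t | t
    · left; linear_combination h * t
    · right; left; linear_combination h * t
    · right; right; left; linear_combination h * t
    · right; right; right; linear_combination h * t
  · intro v _ h2 h3
    simp only [red] at h2 h3 ⊢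
    have s1 : x + v * d + d = x + ((v + 1 : ℕ) : ℤ) * d := by push_cast; ring
    have s2 : x + v * d + 2 * d = x + ((v + 2 : ℕ) : ℤ) * d := by push_cast; ring
    have s3 : x + v * d + 3 * d = x + ((v + 3 : ℕ) : ℤ) * d := by push_cast; ring
    have sp : x + v * d + p * d = x + ((v + p : ℕ) : ℤ) * d := by push_cast; ring
    have b := base_core hp (hxd' v) (by rw [s1]; exact hne' _) (by rw [s2]; exact hne' _)
      (by rw [s3]; exact hne' _)
      (by rw [s1, s2]; apply mul_right_cancel₀ hh; rw [h2]; ring)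
      (by rw [s1, s3]; apply mul_right_cancel₀ hh; rw [h3]; ring)
    obtain ⟨b1, b2⟩ := b
    rw [ZMod.intCast_zmod_eq_zero_iff_dvd] at b1
    obtain ⟨z, hz⟩ := b1
    have hz0 : z ≠ 0 := by
      rintro rfl
      exact hne' v (by simpa using hz)
    have hzd : z + d ≠ 0 := by
      intro h0
      apply hne' (v + p)
      rw [← sp, hz]
      linear_combination (p : ℤ) * h0
    have c := p_core (z := z) b2
    have l1 : lnz p (x + ((v + 1 : ℕ) : ℤ) * d) = d := by
      have : ((p * z + d : ℤ) : ZMod p) = d := by push_cast; simp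
      rw [← s1, hz, lnz_self (by rw [this]; exact b2), this]
    have l0 : lnz p (x + v * d) = lnz p z := by
      rw [hz, ← pow_one (p : ℤ), lnz_mul hz0]
    have lp : lnz p (x + ((v + p : ℕ) : ℤ) * d) = lnz p (z + d) := by
      rw [← sp, hz, ← lnz_mul hzd 1]; congr 1; ring
    rw [l1, l0, lp]
    rcases c with t | t | t
    · left; rw [t]
    · right; left; rw [t]; ring
    · right; right; rw [t]; ring

theorem val_const (hp : 5 ≤ p) (h : ZMod p) (hh : h ≠ 0) (X D : ℤ) (hD : D ≠ 0)
    (hne : ∀ v : ℕ, X + v * D ≠ 0)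
    (h1 : lnz p (X + (1 : ℕ) * D) * h = lnz p (X + (0 : ℕ) * D) * h)
    (h2 : lnz p (X + (2 : ℕ) * D) * h = lnz p (X + (0 : ℕ) * D) * h) :
    ∃ j, ∀ v : ℕ, padicValInt p (X + v * D) = j := by
  obtain ⟨j, x, d, rfl, rfl, hxd⟩ := exists_rep2 (p := p) (X := X) hD
  have hne' : ∀ v : ℕ, x + v * d ≠ 0 := fun v h0 => hne v (by
    linear_combination (p : ℤ) ^ j * h0)
  have red : ∀ v : ℕ, lnz p ((p : ℤ) ^ j * x + v * ((p : ℤ) ^ j * d)) = lnz p (x + v * d) := by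
    intro v
    rw [← lnz_mul (hne' v) j]; congr 1; ring
  obtain ⟨e2, e3⟩ := small_ne hp
  rw [red, red] at h1 h2
  replace h1 := mul_right_cancel₀ hh h1
  replace h2 := mul_right_cancel₀ hh h2
  have hd : (d : ZMod p) = 0 := by
    by_contra hd
    by_cases g0 : ((x + (0 : ℕ) * d : ℤ) : ZMod p) = 0
    · have hx : (x : ZMod p) = 0 := by simpa using g0
      rw [← h1, lnz_self (y := x + (1 : ℕ) * d) (by push_cast; simpa [hx]), lnz_self
        (by push_cast; simp [hx, e2, hd])] at h2
      push_cast at h2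
      apply hd; linear_combination h2
    rw [lnz_self g0] at h1 h2
    by_cases g1 : ((x + (1 : ℕ) * d : ℤ) : ZMod p) = 0
    · have hx : (x : ZMod p) = - d := by push_cast at g1; linear_combination g1
      rw [lnz_self (by push_cast; rw [hx]; intro t; apply hd; linear_combination t)] at h2
      push_cast at h2
      have : (2 * d : ZMod p) = 0 := by linear_combination h2
      simp [e2, hd] at this
    rw [lnz_self g1] at h1
    push_cast at h1
    apply hd; linear_combination h1
  refine ⟨j, fun v => ?_⟩
  apply val_eq (c := x + v * d) (by ring)
  push_cast; rw [hd]; simpa [hd] using hxd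

theorem base_val (hp : 5 ≤ p) (h : ZMod p) (hh : h ≠ 0) (X D : ℤ) (hD : D ≠ 0)
    (hne : ∀ v : ℕ, X + v * D ≠ 0)
    (hb : Base (fun v : ℕ => lnz p (X + v * D) * h)) :
    ∃ j, (∀ v : ℕ, (v : ZMod p) ≠ 0 → padicValInt p (X + v * D) = j) ∧
      (lnz p (X + p * D) * h = lnz p (X + (1 : ℕ) * D) * h →
        lnz p (X + (2 * p : ℕ) * D) * h = 2 * (lnz p (X + (1 : ℕ) * D) * h) →
        padicValInt p (X + p * D) = j + 1) := by
  obtain ⟨j, x, d, rfl, rfl, hxd⟩ := exists_rep2 (p := p) (X := X) hD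
  have hne' : ∀ v : ℕ, x + v * d ≠ 0 := fun v h0 => hne v (by
    linear_combination (p : ℤ) ^ j * h0)
  have red : ∀ v : ℕ, lnz p ((p : ℤ) ^ j * x + v * ((p : ℤ) ^ j * d)) = lnz p (x + v * d) := by
    intro v
    rw [← lnz_mul (hne' v) j]; congr 1; ring
  obtain ⟨e2, e3⟩ := small_ne hp
  obtain ⟨h2, h3⟩ := hb
  simp only [red] at h2 h3
  have n1 := hne' 1
  have n2 := hne' 2
  have n3 := hne' 3
  push_cast at h2 h3 n1 n2 n3
  rw [one_mul] at h2 h3 n1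
  obtain ⟨b1, b2⟩ := base_core hp hxd n1 n2 n3
      (by apply mul_right_cancel₀ hh; rw [h2]; ring)
      (by apply mul_right_cancel₀ hh; rw [h3]; ring)
  refine ⟨j, ?_, ?_⟩
  · intro v hv
    apply val_eq (c := x + v * d) (by ring)
    push_cast; rw [b1]; simp [hv, b2]
  · intro k1 k2
    rw [red, red] at k1 k2
    rw [ZMod.intCast_zmod_eq_zero_iff_dvd] at b1
    obtain ⟨z, rfl⟩ := b1
    have l1 : lnz p (p * z + (1 : ℕ) * d) = d := by
      have : ((p * z + (1 : ℕ) * d : ℤ) : ZMod p) = d := by push_cast; simp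
      rw [lnz_self (by rw [this]; exact b2), this]
    rw [l1] at k1 k2
    have hzd : z + 2 * d ≠ 0 := by
      intro h0
      apply hne' (2 * p)
      push_cast
      linear_combination (p : ℤ) * h0
    rw [show (p * z + (2 * p : ℕ) * d : ℤ) = p ^ 1 * (z + 2 * d) by push_cast; ring,
      lnz_mul hzd] at k2
    apply val_eq (c := z + d) (by ring)
    push_cast
    intro h0
    have hz : (z : ZMod p) = - d := by linear_combination h0
    have g : ((z + 2 * d : ℤ) : ZMod p) = d := by push_cast; rw [hz]; ring
    rw [lnz_self (by rw [g]; exact b2), g] at k2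
    have : (d : ZMod p) * h = 0 := by linear_combination -k2
    simp [hh, b2] at this

end

theorem tile_true {Tl : Type} (V H : Tl → Tl → Prop) (seed : Tl → Prop) {p q K : ℕ}
    [Fact p.Prime] [Fact q.Prime] (hpq : p ≠ q) (hp : 5 ≤ p) (hq : 5 ≤ q)
    (hpK : 2 * p ≤ K) (hqK : 2 * q ≤ K)
    (tile : ℕ → ℕ → Tl) (hs : seed (tile 0 0))
    (hVH : ∀ τ σ, V (tile τ σ) (tile (τ + 1) σ) ∧ H (tile τ σ) (tile τ (σ + 1))) :
    ∃ (r1 u1 : ℕ → ℤ → ZMod p) (r2 u2 : ℕ → ℤ → ZMod q) (T : ℕ → ℤ → Tl),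
    (∀ v, ∀ m, r1 v (m + 1) = r1 v m + 1) ∧
    (∀ v, ∀ m, r2 v (m + 1) = r2 v m + 1) ∧
    (∀ m d : ℤ, 0 ≤ d → SkelRule p K (fun v => r1 v (m + v * d)) (fun v => u1 v (m + v * d))) ∧
    (∀ m d : ℤ, 0 ≤ d → SkelRule q K (fun v => r2 v (m + v * d)) (fun v => u2 v (m + v * d))) ∧
    (∀ m d : ℤ, 0 ≤ d → TRule V H seed p q K (fun v => r1 v (m + v * d))
      (fun v => u1 v (m + v * d)) (fun v => r2 v (m + v * d)) (fun v => u2 v (m + v * d))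
      (fun v => T v (m + v * d))) ∧
    (∀ v m, ∃ τ σ, T v m = tile τ σ) := by
  have h2p : (2 : ZMod p)⁻¹ ≠ 0 := inv_ne_zero (small_ne hp).1
  have h2q : (2 : ZMod q)⁻¹ ≠ 0 := inv_ne_zero (small_ne hq).1
  have hpq0 : (p : ZMod q) ≠ 0 := by
    rw [Ne, ZMod.natCast_eq_zero_iff, Nat.prime_dvd_prime_iff_eq Fact.out Fact.out]
    exact hpq.symm
  have hqp0 : (q : ZMod p) ≠ 0 := by
    rw [Ne, ZMod.natCast_eq_zero_iff, Nat.prime_dvd_prime_iff_eq Fact.out Fact.out]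
    exact hpq
  refine ⟨fun v m => ((2 * m + 1 + 2 * v : ℤ) : ZMod p) * 2⁻¹,
    fun v m => lnz p (2 * m + 1 + 2 * v) * 2⁻¹,
    fun v m => ((2 * m + 1 + 2 * v : ℤ) : ZMod q) * 2⁻¹,
    fun v m => lnz q (2 * m + 1 + 2 * v) * 2⁻¹,
    fun v m => tile (padicValInt p (2 * m + 1 + 2 * v)) (padicValInt q (2 * m + 1 + 2 * v)),
    ?_, ?_, ?_, ?_, ?_, fun v m => ⟨_, _, rfl⟩⟩
  · intro v m
    have := (small_ne hp).1
    push_cast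
    field_simp
    ring
  · intro v m
    have := (small_ne hq).1
    push_cast
    field_simp
    ring
  all_goals
    intro m d hd
    have e : ∀ v : ℕ, 2 * (m + v * d) + 1 + 2 * v = (2 * m + 1) + v * (2 * (d + 1)) := by
      intro v; ring
    have hne : ∀ v : ℕ, (2 * m + 1) + v * (2 * (d + 1)) ≠ 0 := by
      intro v h
      have : (2 * m + 1) + 2 * (v * (d + 1)) = 0 := by rw [← h]; ring
      omega
    have hD : 2 * (d + 1) ≠ 0 := by omega
    simp only [e]
  · exact skel_true hp _ h2p _ _ hD hne
  · exact skel_true hq _ h2q _ _ hD hne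
  · refine ⟨?_, ?_, ?_, ?_⟩
    · intro c1 c2 v hv
      obtain ⟨j1, hj1⟩ := val_const hp _ h2p _ _ hD hne (c1 1 (by omega)) (c1 2 (by omega))
      obtain ⟨j2, hj2⟩ := val_const hq _ h2q _ _ hD hne (c2 1 (by omega)) (c2 2 (by omega))
      simp only [hj1, hj2]
    · intro b1 b2 k1 k2
      obtain ⟨j1, hj1, hj1'⟩ := base_val hp _ h2p _ _ hD hne b1
      obtain ⟨j2, hj2, -⟩ := base_val hq _ h2q _ _ hD hne b2
      beta_reduce
      rw [hj1 1 (by simp), hj2 1 (by simp), hj2 p hpq0, hj1' k1 k2]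
      exact (hVH _ _).1
    · intro b1 b2 k1 k2
      obtain ⟨j1, hj1, -⟩ := base_val hp _ h2p _ _ hD hne b1
      obtain ⟨j2, hj2, hj2'⟩ := base_val hq _ h2q _ _ hD hne b2
      beta_reduce
      rw [hj1 1 (by simp), hj2 1 (by simp), hj1 q hqp0, hj2' k1 k2]
      exact (hVH _ _).2
    · intro c1 c2
      beta_reduce at c1 c2 ⊢
      rw [val_self (left_ne_zero_of_mul c1), val_self (left_ne_zero_of_mul c2)]
      exact hs

end AND

open Filter

namespace AND

theorem dist_zero {n : ℕ} (x : ℤ → Fin (n + 1)) (h : ∀ i, x i = 0) :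
    besicovitchDist x (fun _ => 0) = 0 := by
  simp [besicovitchDist, h]

theorem dist_one {n : ℕ} (x : ℤ → Fin (n + 1)) (h : ∀ i, x i ≠ 0) :
    besicovitchDist x (fun _ => 0) = 1 := by
  have : (fun m : ℕ =>
      (((Finset.Icc (-(m : ℤ)) (m : ℤ)).filter fun i => x i ≠ (fun _ => (0 : Fin (n + 1))) i).card : ℝ) /
        (2 * (m : ℝ) + 1)) = fun _ => 1 := by
    funext m
    have e : ((Finset.Icc (-(m : ℤ)) (m : ℤ)).filter fun i => x i ≠ (fun _ => (0 : Fin (n + 1))) i)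
        = Finset.Icc (-(m : ℤ)) (m : ℤ) := by
      apply Finset.filter_true_of_mem
      intro i _
      exact h i
    rw [e, Int.card_Icc]
    have : ((m : ℤ) + 1 - -(m : ℤ)).toNat = 2 * m + 1 := by omega
    rw [this]
    push_cast
    field_simp
  rw [besicovitchDist, this]
  simp

theorem ca_shift {n : ℕ} (f : Fin (n + 1) × Fin (n + 1) × Fin (n + 1) → Fin (n + 1))
    (x : ℤ → Fin (n + 1)) (a : ℤ) (t : ℕ) (i : ℤ) :
    (caOfRule f)^[t] (fun j => x (a + j)) i = (caOfRule f)^[t] x (a + i) := by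
  induction t generalizing i with
  | zero => rfl
  | succ t ih =>
    rw [Function.iterate_succ_apply', Function.iterate_succ_apply']
    simp only [caOfRule, ih]
    rw [show a + (i - 1) = a + i - 1 by ring, show a + (i + 1) = a + i + 1 by ring]

theorem and_iff {n : ℕ} (f : Fin (n + 1) × Fin (n + 1) × Fin (n + 1) → Fin (n + 1))
    (hf : ∀ l c r, f (l, c, r) ≠ 0 → c ≠ 0 ∧ r ≠ 0) :
    (∀ ε : ℝ, 0 < ε → ∃ k : ℕ, ∀ x : ℤ → Fin (n + 1),
            besicovitchDist ((caOfRule f)^[k] x) (fun _ => 0) < ε) ↔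
      ¬ ∃ x : ℤ → Fin (n + 1), ∀ (t : ℕ) (i : ℤ), (caOfRule f)^[t] x i ≠ 0 := by
  constructor
  · rintro h ⟨x, hx⟩
    obtain ⟨k, hk⟩ := h 1 one_pos
    have := hk x
    rw [dist_one _ (hx k)] at this
    exact lt_irrefl _ this
  · intro hno
    let C : ℕ → Set (ℤ → Fin (n + 1)) := fun T =>
      {x | ∀ t ≤ T, ∀ i : ℤ, -(T : ℤ) ≤ i → i ≤ T → (caOfRule f)^[t] x i ≠ 0}
    have hcont : Continuous (caOfRule f) := by
      apply continuous_pi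
      intro i
      have : Continuous f := continuous_of_discreteTopology
      exact this.comp (by fun_prop)
    have hT : ∃ T, C T = ∅ := by
      by_contra! hne
      have : (⋂ T, C T).Nonempty := by
        apply IsCompact.nonempty_iInter_of_directed_nonempty_isCompact_isClosed
        · intro T T'
          refine ⟨max T T', ?_, ?_⟩
          · intro x hx t ht i h1 h2
            exact hx t (ht.trans (le_max_left _ _)) i
              (by have : (T : ℤ) ≤ (max T T' : ℕ) := by exact_mod_cast le_max_left _ _
                  omega) (by have : (T : ℤ) ≤ (max T T' : ℕ) := by exact_mod_cast le_max_left _ _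
                             omega)
          · intro x hx t ht i h1 h2
            exact hx t (ht.trans (le_max_right _ _)) i
              (by have : (T' : ℤ) ≤ (max T T' : ℕ) := by exact_mod_cast le_max_right _ _
                  omega) (by have : (T' : ℤ) ≤ (max T T' : ℕ) := by exact_mod_cast le_max_right _ _
                             omega)
        · exact fun T => hne T
        · intro T
          apply IsClosed.isCompact
          simp only [C, Set.setOf_forall]
          refine isClosed_iInter fun t => isClosed_iInter fun _ => isClosed_iInter fun i =>
            isClosed_iInter fun _ => isClosed_iInter fun _ => ?_
          have : Continuous fun x : ℤ → Fin (n + 1) => (caOfRule f)^[t] x i :=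
            (continuous_apply i).comp (hcont.iterate t)
          exact (isClosed_discrete {a : Fin (n + 1) | a ≠ 0}).preimage this
        · intro T
          simp only [C, Set.setOf_forall]
          refine isClosed_iInter fun t => isClosed_iInter fun _ => isClosed_iInter fun i =>
            isClosed_iInter fun _ => isClosed_iInter fun _ => ?_
          have : Continuous fun x : ℤ → Fin (n + 1) => (caOfRule f)^[t] x i :=
            (continuous_apply i).comp (hcont.iterate t)
          exact (isClosed_discrete {a : Fin (n + 1) | a ≠ 0}).preimage this
      obtain ⟨x, hx⟩ := this
      rw [Set.mem_iInter] at hx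
      refine hno ⟨x, fun t i => ?_⟩
      exact hx (t + i.natAbs) t (by omega) i (by omega) (by omega)
    obtain ⟨T, hT⟩ := hT
    intro ε hε
    refine ⟨3 * T, fun x => ?_⟩
    rw [dist_zero]
    · exact hε
    intro i
    by_contra hi
    have prop : ∀ s ≤ 3 * T, ∀ j ≤ s, (caOfRule f)^[3 * T - s] x (i + j) ≠ 0 := by
      intro s
      induction s with
      | zero => 
        intro _ j hj
        have : j = 0 := by omega
        subst this
        simpa using hi
      | succ s ih =>
        intro hs j hj
        have step : ∀ j' : ℕ, j' ≤ s → (caOfRule f)^[3 * T - (s + 1)] x (i + j') ≠ 0 ∧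
            (caOfRule f)^[3 * T - (s + 1)] x (i + j' + 1) ≠ 0 := by
          intro j' hj'
          have := ih (by omega) j' hj'
          rw [show 3 * T - s = (3 * T - (s + 1)) + 1 by omega,
            Function.iterate_succ_apply'] at this
          exact hf _ _ _ this
        rcases Nat.lt_or_ge s j with h | h
        · have : j = s + 1 := by omega
          subst this
          have := (step s le_rfl).2
          push_cast
          rwa [← add_assoc]
        · exact (step j h).1
    have : (fun j => x (i + T + j)) ∈ C T := by
      intro t ht i' h1 h2
      rw [ca_shift]
      have := prop (3 * T - t) (by omega) (T + i').toNat (by omega)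
      rw [show 3 * T - (3 * T - t) = t by omega] at this
      convert this using 2
      omega
    rw [hT] at this
    exact this

end AND

open Filter

namespace AND

/-- Base `B` digits. -/
def dig (B s i : ℕ) : ℕ := s / B ^ i % B

/-- Number with prescribed base `B` digits. -/
def undig (B : ℕ) (g : ℕ → ℕ) : ℕ := ∑ j ∈ Finset.range 225, g j * B ^ j

theorem undig_lt {B : ℕ} {g : ℕ → ℕ} (hg : ∀ j < 225, g j < B) :
    undig B g < B ^ 225 := by
  have h := (finFunctionFinEquiv (n := 225) (m := B) (fun j => ⟨g j, hg j j.2⟩)).2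
  have e : ((finFunctionFinEquiv (n := 225) (m := B) (fun j => ⟨g j, hg j j.2⟩)) : ℕ)
      = undig B g := by
    rw [finFunctionFinEquiv_apply, undig, Finset.sum_range]
  omega

theorem dig_undig {B : ℕ} {g : ℕ → ℕ} (hg : ∀ j < 225, g j < B) (i : ℕ) (hi : i < 225) :
    dig B (undig B g) i = g i := by
  have e : ((finFunctionFinEquiv (n := 225) (m := B) (fun j => ⟨g j, hg j j.2⟩)) : ℕ)
      = undig B g := by
    rw [finFunctionFinEquiv_apply, undig, Finset.sum_range]
  have h := congrFun (finFunctionFinEquiv.symm_apply_apply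
    (fun j : Fin 225 => (⟨g j, hg j j.2⟩ : Fin B))) ⟨i, hi⟩
  have h2 := congrArg Fin.val h
  rw [finFunctionFinEquiv_symm_apply_val, e] at h2
  exact h2

/-- Consistency of a cell and its right neighbour. -/
def okc (Loc : (Fin 15 → ℕ) → Prop) (Adj : ℕ → ℕ → Prop) (B c r : ℕ) : Prop :=
  (∀ s : Fin 15, Loc (fun v => dig B c (15 * s + v))) ∧
  ∀ s v : Fin 15, Adj (dig B c (15 * s + v))
    (if (s : ℕ) + 1 < 15 then dig B c (15 * (s + 1) + v) else dig B r v)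

/-- Digits of the next state. -/
def nd (B c r i : ℕ) : ℕ :=
  if i / 15 + i % 15 < 15 then dig B c (15 * (i / 15 + i % 15) + i % 15)
  else dig B r (15 * (i / 15 + i % 15 - 15) + i % 15)

open Classical in
/-- The local rule on natural numbers. -/
noncomputable def ruleN (Loc : (Fin 15 → ℕ) → Prop) (Adj : ℕ → ℕ → Prop) (B c r : ℕ) : ℕ :=
  if c ≠ 0 ∧ r ≠ 0 ∧ okc Loc Adj B (c - 1) (r - 1) then 1 + undig B (nd B (c - 1) (r - 1)) else 0

/-- The local rule. -/
noncomputable def rule (Loc : (Fin 15 → ℕ) → Prop) (Adj : ℕ → ℕ → Prop) (B : ℕ) :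
    Fin (B ^ 225 + 1) × Fin (B ^ 225 + 1) × Fin (B ^ 225 + 1) → Fin (B ^ 225 + 1) :=
  fun x => Fin.ofNat (B ^ 225 + 1) (ruleN Loc Adj B x.2.1 x.2.2)

theorem nd_lt {B : ℕ} (hB : 0 < B) (c r i : ℕ) : nd B c r i < B := by
  unfold nd dig
  split_ifs <;> exact Nat.mod_lt _ hB

section
variable {Loc : (Fin 15 → ℕ) → Prop} {Adj : ℕ → ℕ → Prop} {B : ℕ}

theorem ruleN_lt (hB : 0 < B) (c r : ℕ) : ruleN Loc Adj B c r < B ^ 225 + 1 := by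
  unfold ruleN
  have := undig_lt (g := nd B (c - 1) (r - 1)) (fun j (_ : j < 225) => nd_lt hB (c - 1) (r - 1) j)
  split_ifs <;> omega

theorem rule_val (hB : 0 < B) (x : Fin (B ^ 225 + 1) × Fin (B ^ 225 + 1) × Fin (B ^ 225 + 1)) :
    (rule Loc Adj B x : ℕ) = ruleN Loc Adj B x.2.1 x.2.2 := by
  unfold rule
  rw [Fin.val_ofNat]
  exact Nat.mod_eq_of_lt (ruleN_lt hB _ _)

theorem ca_val (hB : 0 < B) (x : ℤ → Fin (B ^ 225 + 1)) (i : ℤ) :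
    (caOfRule (rule Loc Adj B) x i : ℕ) = ruleN Loc Adj B (x i) (x (i + 1)) := by
  unfold caOfRule
  rw [rule_val hB]

theorem ruleN_ne {c r : ℕ} (h : ruleN Loc Adj B c r ≠ 0) :
    c ≠ 0 ∧ r ≠ 0 ∧ okc Loc Adj B (c - 1) (r - 1) := by
  unfold ruleN at h
  by_contra h'
  exact h (if_neg h')

theorem ruleN_eq {c r : ℕ} (h : c ≠ 0 ∧ r ≠ 0 ∧ okc Loc Adj B (c - 1) (r - 1)) :
    ruleN Loc Adj B c r = 1 + undig B (nd B (c - 1) (r - 1)) := if_pos h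

theorem rule_spread (hB : 0 < B) (l c r) (h : rule Loc Adj B (l, c, r) ≠ 0) : c ≠ 0 ∧ r ≠ 0 := by
  have h' : ruleN Loc Adj B c r ≠ 0 := by
    rw [← rule_val hB (l, c, r)]
    intro h0
    exact h (Fin.ext h0)
  obtain ⟨h1, h2, -⟩ := ruleN_ne h'
  exact ⟨fun h => h1 (by simp [h]), fun h => h2 (by simp [h])⟩

theorem rule_zero (hB : 0 < B) : rule Loc Adj B (0, 0, 0) = 0 := by
  by_contra h
  exact (rule_spread hB _ _ _ h).1 rfl

theorem immortal_iff (hB : 0 < B) :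
    (∃ x : ℤ → Fin (B ^ 225 + 1), ∀ (t : ℕ) (i : ℤ), (caOfRule (rule Loc Adj B))^[t] x i ≠ 0) ↔
    ∃ g : ℕ → ℤ → ℕ, (∀ v m, g v m < B) ∧
      (∀ m d : ℤ, 0 ≤ d → Loc (fun v : Fin 15 => g v (m + v * d))) ∧
      (∀ v < 15, ∀ m, Adj (g v m) (g v (m + 1))) := by
  constructor
  · rintro ⟨x, hx⟩
    set y : ℕ → ℤ → ℕ := fun t i => ((caOfRule (rule Loc Adj B))^[t] x i : ℕ) - 1 with hy
    have hne : ∀ t i, ((caOfRule (rule Loc Adj B))^[t] x i : ℕ) ≠ 0 :=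
      fun t i h => hx t i (Fin.ext h)
    have hstep : ∀ t i, ((caOfRule (rule Loc Adj B))^[t + 1] x i : ℕ) =
        ruleN Loc Adj B ((caOfRule (rule Loc Adj B))^[t] x i)
          ((caOfRule (rule Loc Adj B))^[t] x (i + 1)) := by
      intro t i
      rw [Function.iterate_succ_apply']
      rw [ca_val hB]
    have hok : ∀ t i, okc Loc Adj B (y t i) (y t (i + 1)) := by
      intro t i
      have := hne (t + 1) i
      rw [hstep] at this
      exact (ruleN_ne this).2.2
    have hyy : ∀ t i, y (t + 1) i = undig B (nd B (y t i) (y t (i + 1))) := by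
      intro t i
      have h1 := hne (t + 1) i
      rw [hstep] at h1
      have := ruleN_eq (ruleN_ne h1)
      simp only [hy]
      rw [hstep, this]
      omega
    set g : ℕ → ℤ → ℕ := fun v m => dig B (y 0 (m / 15)) (15 * (m % 15).toNat + v) with hg
    have key : ∀ t i, ∀ s < 15, ∀ v < 15, dig B (y t i) (15 * s + v) = g v (15 * i + s + v * t) := by
      intro t
      induction t with
      | zero =>
        intro i s hs v hv
        simp only [hg]
        rw [show (15 * i + s + v * (0 : ℕ) : ℤ) / 15 = i by omega,
          show ((15 * i + s + v * (0 : ℕ) : ℤ) % 15).toNat = s by omega]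
      | succ t ih =>
        intro i s hs v hv
        rw [hyy, dig_undig (fun j _ => nd_lt hB _ _ j) _ (by omega), nd,
          show (15 * s + v) / 15 = s by omega, show (15 * s + v) % 15 = v by omega]
        split_ifs with h
        · rw [ih i _ h v hv]
          congr 1; push_cast; ring
        · rw [ih (i + 1) _ (by omega) v hv]
          congr 1
          rw [Nat.cast_sub (by omega)]
          push_cast; ring
    have dec : ∀ m : ℤ, ∃ i : ℤ, ∃ s : ℕ, s < 15 ∧ m = 15 * i + s :=
      fun m => ⟨m / 15, (m % 15).toNat, by omega, by omega⟩
    refine ⟨g, fun v m => Nat.mod_lt _ hB, ?_, ?_⟩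
    · intro m d hd
      obtain ⟨i, s, hs, rfl⟩ := dec m
      obtain ⟨t, rfl⟩ := Int.eq_ofNat_of_zero_le hd
      have := (hok t i).1 ⟨s, hs⟩
      convert this using 2 with v
      exact (key t i s hs v v.2).symm
    · intro v hv m
      obtain ⟨i, s, hs, rfl⟩ := dec m
      have := (hok 0 i).2 ⟨s, hs⟩ ⟨v, hv⟩
      rw [key 0 i s hs v hv] at this
      simp only at this
      have e2 : (if s + 1 < 15 then dig B (y 0 i) (15 * (s + 1) + v) else dig B (y 0 (i + 1)) v)
          = g v (15 * i + s + 1) := by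
        split_ifs with h
        · rw [key 0 i (s + 1) h v hv]
          congr 1; push_cast; ring
        · have := key 0 (i + 1) 0 (by omega) v hv
          rw [show 15 * 0 + v = v by omega] at this
          rw [this]
          congr 1
          push_cast
          omega
      rw [e2] at this
      simpa using this
  · rintro ⟨g, hg, hL, hA⟩
    set y : ℕ → ℤ → ℕ := fun t i =>
      undig B (fun j => g (j % 15) (15 * i + (j / 15 : ℕ) + (j % 15 : ℕ) * t)) with hy
    have hylt : ∀ t i, y t i < B ^ 225 := fun t i => undig_lt fun j _ => hg _ _
    have key : ∀ t i, ∀ s < 15, ∀ v < 15, dig B (y t i) (15 * s + v) = g v (15 * i + s + v * t) := by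
      intro t i s hs v hv
      simp only [hy]
      rw [dig_undig (fun j _ => hg _ _) _ (by omega), show (15 * s + v) / 15 = s by omega,
        show (15 * s + v) % 15 = v by omega]
    have hok : ∀ t i, okc Loc Adj B (y t i) (y t (i + 1)) := by
      intro t i
      refine ⟨fun s => ?_, fun s v => ?_⟩
      · have := hL (15 * i + s) t (by omega)
        convert this using 2 with v
        exact key t i s s.2 v v.2
      · rw [key t i s s.2 v v.2]
        have e2 : (if (s : ℕ) + 1 < 15 then dig B (y t i) (15 * (s + 1) + v)
            else dig B (y t (i + 1)) v) = g v (15 * i + s + v * t + 1) := by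
          split_ifs with h
          · rw [key t i (s + 1) h v v.2]
            congr 1; push_cast; ring
          · have := key t (i + 1) 0 (by omega) v v.2
            rw [show 15 * 0 + (v : ℕ) = v by omega] at this
            rw [this]
            congr 1
            have : (s : ℕ) = 14 := by omega
            rw [this]
            push_cast
            ring
        rw [e2]
        exact hA v v.2 _
    have hnext : ∀ t i, undig B (nd B (y t i) (y t (i + 1))) = y (t + 1) i := by
      intro t i
      unfold undig
      simp only [hy]
      unfold undig
      apply Finset.sum_congr rfl
      intro j hj
      rw [Finset.mem_range] at hj
      congr 1
      have hk1 := fun s hs => key t i s hs (j % 15) (by omega)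
      have hk2 := fun s hs => key t (i + 1) s hs (j % 15) (by omega)
      unfold nd
      split_ifs with h
      · refine (hk1 _ h).trans ?_
        congr 1; push_cast; ring
      · refine (hk2 (j / 15 + j % 15 - 15) (by omega)).trans ?_
        congr 1
        rw [Nat.cast_sub (by omega)]
        push_cast; ring
    refine ⟨fun i => ⟨1 + y 0 i, by have := hylt 0 i; omega⟩, ?_⟩
    have main : ∀ t i, ((caOfRule (rule Loc Adj B))^[t] (fun i => (⟨1 + y 0 i, by
        have := hylt 0 i; omega⟩ : Fin (B ^ 225 + 1))) i : ℕ) = 1 + y t i := by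
      intro t
      induction t with
      | zero => intro i; rfl
      | succ t ih =>
        intro i
        rw [Function.iterate_succ_apply']
        rw [ca_val hB, ih, ih, ruleN_eq ⟨by omega, by omega, by simpa using hok t i⟩, ← hnext]
        simp
    intro t i h
    have := main t i
    rw [h] at this
    simp at this
    omega

end
end AND

namespace AND

/-- Stack operations. -/
inductive Op (Γ : Type) : Type
  | keep : Op Γ
  | pop : Op Γ
  | push : Γ → Op Γ

/-- Effect of an operation on a stack. -/
def Op.app {Γ : Type} : Op Γ → (ℕ → Option Γ) → (ℕ → Option Γ)
  | .keep, s => s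
  | .pop, s => fun n => s (n + 1)
  | .push a, s => fun n => if n = 0 then some a else s (n - 1)

section
variable {Q κ Γ : Type}

/-- One step of a stack machine. -/
def mstep (δ : Q → (κ → Option Γ) → Option (Q × (κ → Op Γ)))
    (c : Q × (κ → ℕ → Option Γ)) : Option (Q × (κ → ℕ → Option Γ)) :=
  (δ c.1 (fun k => c.2 k 0)).map fun x => (x.1, fun k => (x.2 k).app (c.2 k))

/-- The run of a stack machine. -/
def mrun (δ : Q → (κ → Option Γ) → Option (Q × (κ → Op Γ)))
    (c : Q × (κ → ℕ → Option Γ)) : ℕ → Option (Q × (κ → ℕ → Option Γ))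
  | 0 => some c
  | n + 1 => (mrun δ c n).bind (mstep δ)

/-- Initial configuration. -/
def minit [DecidableEq κ] (q0 : Q) (k0 : κ) (ℓ : List Γ) : Q × (κ → ℕ → Option Γ) :=
  (q0, fun k n => if k = k0 then ℓ[n]? else none)

/-- The finite part of a tile. -/
structure Tile0 (Q κ Γ : Type) where
  flag : Bool
  b : Bool
  q : Q
  tops : κ → Option Γ
  prev : κ → Option Γ
  cur : κ → Option Γ
  next : κ → Option Γ

/-- New letter in a column. -/
def Op.cell {Γ : Type} (f : Bool) (p c n : Option Γ) : Op Γ → Option Γ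
  | .keep => c
  | .pop => n
  | .push a => if f then some a else p

/-- Finite part of the vertical constraint. -/
def V0 (δ : Q → (κ → Option Γ) → Option (Q × (κ → Op Γ))) (t t' : Tile0 Q κ Γ) : Prop :=
  t'.flag = t.flag ∧ t'.b = false ∧ ∃ x, δ t.q t.tops = some x ∧ t'.q = x.1 ∧
    ∀ k, t'.cur k = (x.2 k).cell t.flag (t.prev k) (t.cur k) (t.next k)

/-- Finite part of the horizontal constraint. -/
def H0 (q0 : Q) (k0 : κ) (t t' : Tile0 Q κ Γ) : Prop :=
  t'.flag = false ∧ t'.b = t.b ∧ t'.q = t.q ∧ t'.tops = t.tops ∧ t'.prev = t.cur ∧ t'.cur = t.next ∧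
  (t.flag = true → t.tops = t.cur) ∧ (t.b = true → t.q = q0 ∧ ∀ k, k ≠ k0 → t.cur k = none)

/-- Vertical constraint. -/
def VR (δ : Q → (κ → Option Γ) → Option (Q × (κ → Op Γ))) (t t' : Tile0 Q κ Γ × ℕ) : Prop :=
  V0 δ t.1 t'.1 ∧ t'.2 = t.2

/-- Horizontal constraint. -/
def HR (q0 : Q) (k0 : κ) (ℓ : List Γ) (t t' : Tile0 Q κ Γ × ℕ) : Prop :=
  H0 q0 k0 t.1 t'.1 ∧ t'.2 = min (t.2 + 1) ℓ.length ∧ (t.1.b = true → t.1.cur k0 = ℓ[t.2]?)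

/-- Finite part of the seed constraint. -/
def seed0 (t : Tile0 Q κ Γ) : Prop := t.flag = true ∧ t.b = true

/-- Seed constraint. -/
def seedR (t : Tile0 Q κ Γ × ℕ) : Prop := seed0 t.1 ∧ t.2 = 0

variable [DecidableEq κ] {δ : Q → (κ → Option Γ) → Option (Q × (κ → Op Γ))} {q0 : Q} {k0 : κ}
  {ℓ : List Γ}

theorem run_of_tiles (k : ℕ) (tile : ℕ → ℕ → Tile0 Q κ Γ × ℕ) (hs : seedR (tile 0 0))
    (hVH : ∀ τ < k, ∀ σ < k, VR δ (tile τ σ) (tile (τ + 1) σ) ∧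
      HR q0 k0 ℓ (tile τ σ) (tile τ (σ + 1))) (τ : ℕ) (hτ : τ < k) :
    ∃ c, mrun δ (minit q0 k0 ℓ) τ = some c := by
  have hk : 0 < k := by omega
  have hV := fun τ σ hτ hσ => (hVH τ hτ σ hσ).1
  have hH := fun τ σ hτ hσ => (hVH τ hτ σ hσ).2
  have flag0 : ∀ τ ≤ k, (tile τ 0).1.flag = true := by
    intro τ
    induction τ with
    | zero => intro _; exact hs.1.1
    | succ τ ih => intro h; rw [(hV τ 0 (by omega) hk).1.1]; exact ih (by omega)
  have flag1 : ∀ τ σ, τ < k → σ < k → (tile τ (σ + 1)).1.flag = false := 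
    fun τ σ hτ hσ => (hH τ σ hτ hσ).1.1
  have tops : ∀ τ < k, ∀ σ < k, (tile τ σ).1.tops = (tile τ 0).1.cur := by
    intro τ hτ σ
    induction σ with
    | zero => intro _; exact (hH τ 0 hτ hk).1.2.2.2.2.2.2.1 (flag0 τ hτ.le)
    | succ σ ih => intro h; rw [(hH τ σ hτ (by omega)).1.2.2.2.1]; exact ih (by omega)
  have row0 : ∀ σ < k, (tile 0 σ).1.b = true ∧ (tile 0 σ).2 = min σ ℓ.length := by
    intro σ
    induction σ with
    | zero => intro _; exact ⟨hs.1.2, by simpa using hs.2⟩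
    | succ σ ih =>
      intro h
      have i := ih (by omega)
      have j := hH 0 σ hk (by omega)
      refine ⟨by rw [j.1.2.1]; exact i.1, ?_⟩
      rw [j.2.1, i.2]
      omega
  have main : ∀ τ < k, ∃ c, mrun δ (minit q0 k0 ℓ) τ = some c ∧
      (∀ σ < k, (tile τ σ).1.q = c.1) ∧
      (∀ σ, τ + σ < k → ∀ j, (tile τ σ).1.cur j = c.2 j σ) := by
    intro τ
    induction τ with
    | zero =>
      intro _
      refine ⟨_, rfl, ?_, ?_⟩
      · intro σ hσ
        exact ((hH 0 σ hk hσ).1.2.2.2.2.2.2.2 (row0 σ hσ).1).1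
      · intro σ hσ j
        have h := hH 0 σ hk (by omega)
        have r := row0 σ (by omega)
        simp only [minit]
        split_ifs with hj
        · subst hj
          rw [h.2.2 r.1, r.2]
          rcases le_total σ ℓ.length with h1 | h1
          · rw [min_eq_left h1]
          · rw [min_eq_right h1]; simp [h1]
        · exact (h.1.2.2.2.2.2.2.2 r.1).2 j hj
    | succ τ ih =>
      intro hτ
      obtain ⟨c, hc, hq, hcur⟩ := ih (by omega)
      have ht : ∀ σ < k, (tile τ σ).1.tops = fun j => c.2 j 0 := by
        intro σ hσ
        rw [tops τ (by omega) σ hσ]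
        funext j
        exact hcur 0 (by omega) j
      obtain ⟨x, hx, -⟩ := (hV τ 0 (by omega) hk).1.2.2
      rw [ht 0 hk, hq 0 hk] at hx
      refine ⟨(x.1, fun j => (x.2 j).app (c.2 j)), ?_, ?_, ?_⟩
      · simp [mrun, hc, mstep, hx]
      · intro σ hσ
        obtain ⟨y, hy, e1, -⟩ := (hV τ σ (by omega) hσ).1.2.2
        rw [ht σ hσ, hq σ hσ, hx] at hy
        obtain rfl := Option.some.inj hy
        exact e1
      · intro σ hσ j
        obtain ⟨y, hy, -, e2⟩ := (hV τ σ (by omega) (by omega)).1.2.2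
        rw [ht σ (by omega), hq σ (by omega), hx] at hy
        obtain rfl := Option.some.inj hy
        rw [e2 j]
        beta_reduce
        dsimp only
        cases hop : x.2 j with
        | keep => simp only [hop, Op.cell, Op.app]; exact hcur σ (by omega) j
        | pop =>
          simp only [hop, Op.cell, Op.app]
          rw [← hcur (σ + 1) (by omega) j, (hH τ σ (by omega) (by omega)).1.2.2.2.2.2.1]
        | push a =>
          simp only [hop, Op.cell, Op.app]
          rcases σ with _ | σ
          · simp [flag0 τ (by omega)]
          · rw [flag1 τ σ (by omega) (by omega), (hH τ σ (by omega) (by omega)).1.2.2.2.2.1,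
              hcur σ (by omega) j]
            simp
  obtain ⟨c, hc, -⟩ := main τ hτ
  exact ⟨c, hc⟩

theorem tiles_of_run (h : ∀ τ, ∃ c, mrun δ (minit q0 k0 ℓ) τ = some c) :
    ∃ tile : ℕ → ℕ → Tile0 Q κ Γ × ℕ, seedR (tile 0 0) ∧
    (∀ τ σ, VR δ (tile τ σ) (tile (τ + 1) σ) ∧ HR q0 k0 ℓ (tile τ σ) (tile τ (σ + 1))) ∧
    ∀ τ σ, (tile τ σ).2 < ℓ.length + 1 := by
  choose c hc using h
  have hc0 : c 0 = minit q0 k0 ℓ := by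
    have := hc 0
    simp only [mrun] at this
    exact (Option.some.inj this).symm
  have hstep : ∀ τ, ∃ x, δ (c τ).1 (fun k => (c τ).2 k 0) = some x ∧
      c (τ + 1) = (x.1, fun k => (x.2 k).app ((c τ).2 k)) := by
    intro τ
    have := hc (τ + 1)
    rw [mrun, hc τ, Option.bind_some, mstep, Option.map_eq_some_iff] at this
    obtain ⟨x, h1, h2⟩ := this
    exact ⟨x, h1, h2.symm⟩
  refine ⟨fun τ σ => (⟨σ = 0, τ = 0, (c τ).1, fun k => (c τ).2 k 0, fun k => (c τ).2 k (σ - 1),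
    fun k => (c τ).2 k σ, fun k => (c τ).2 k (σ + 1)⟩, min σ ℓ.length), ?_, ?_, ?_⟩
  · simp [seedR, seed0]
  · intro τ σ
    obtain ⟨x, h1, h2⟩ := hstep τ
    refine ⟨⟨⟨rfl, by simp, x, h1, by simp [h2], ?_⟩, rfl⟩, ⟨?_, by simp only; omega, ?_⟩⟩
    · intro k
      simp only [h2]
      cases x.2 k <;> simp [Op.cell, Op.app]
    · refine ⟨by simp, rfl, rfl, rfl, by simp, rfl, ?_, ?_⟩
      · intro h
        have : σ = 0 := by simpa using h
        subst this
        rfl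
      · intro h
        have : τ = 0 := by simpa using h
        subst this
        dsimp only
        rw [hc0]
        refine ⟨rfl, fun k hk => ?_⟩
        simp [minit, hk]
    · intro h
      have : τ = 0 := by simpa using h
      subst this
      dsimp only
      rw [hc0]
      simp only [minit, if_true]
      rcases le_total σ ℓ.length with h1 | h1
      · rw [min_eq_left h1]
      · rw [min_eq_right h1]; simp [h1]
  · intro τ σ
    simp only
    omega

end
end AND

namespace AND

section
variable {Q κ Γ : Type}

theorem mrun_add (δ : Q → (κ → Option Γ) → Option (Q × (κ → Op Γ))) (c m n) :
    mrun δ c (m + n) = (mrun δ c m).bind fun c' => mrun δ c' n := by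
  induction n with
  | zero => simp [mrun]
  | succ n ih => rw [← add_assoc, mrun, ih, Option.bind_assoc]; rfl

theorem mrun_succ_left (δ : Q → (κ → Option Γ) → Option (Q × (κ → Op Γ))) (c n) :
    mrun δ c (n + 1) = (mstep δ c).bind fun c' => mrun δ c' n := by
  rw [add_comm, mrun_add]; simp [mrun]

/-- Restriction of a machine to a set of states. -/
noncomputable def restr (δ : Q → (κ → Option Γ) → Option (Q × (κ → Op Γ))) (S : Set Q) :
    S → (κ → Option Γ) → Option (S × (κ → Op Γ)) :=
  open Classical in
  fun q a => (δ q a).bind fun x => if h : x.1 ∈ S then some (⟨x.1, h⟩, x.2) else none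

theorem mrun_restr (δ : Q → (κ → Option Γ) → Option (Q × (κ → Op Γ))) (S : Set Q)
    (hS : ∀ q ∈ S, ∀ a x, δ q a = some x → x.1 ∈ S) (q : S) (s : κ → ℕ → Option Γ) (n : ℕ) :
    (mrun (restr δ S) (q, s) n).map (fun c => ((c.1 : Q), c.2)) = mrun δ (q, s) n := by
  induction n generalizing q s with
  | zero => simp [mrun]
  | succ n ih =>
    rw [mrun_succ_left, mrun_succ_left]
    simp only [mstep, restr]
    cases h : δ q (fun k => s k 0) with
    | none => simp
    | some x =>
      have := hS q q.2 _ x h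
      simp only [Option.bind_some, this, dif_pos, Option.map_some]
      exact ih ⟨x.1, this⟩ _

end

section
open Turing Turing.TM2
variable {κ Γ Λ σ : Type} [DecidableEq κ]

/-- Micro-step machine of a TM2 program. -/
def micro (M : Λ → Stmt (fun _ : κ => Γ) Λ σ) :
    (Stmt (fun _ : κ => Γ) Λ σ × σ) → (κ → Option Γ) →
      Option ((Stmt (fun _ : κ => Γ) Λ σ × σ) × (κ → Op Γ))
  | (.push k f q, v), _ => some ((q, v), fun k' => if k' = k then .push (f v) else .keep)
  | (.peek k f q, v), a => some ((q, f v (a k)), fun _ => .keep)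
  | (.pop k f q, v), a => some ((q, f v (a k)), fun k' => if k' = k then .pop else .keep)
  | (.load f q, v), _ => some ((q, f v), fun _ => .keep)
  | (.branch f q₁ q₂, v), _ => some ((cond (f v) q₁ q₂, v), fun _ => .keep)
  | (.goto f, v), _ => some ((M (f v), v), fun _ => .keep)
  | (.halt, _), _ => none

/-- Embedding of stacks. -/
def embS (S : κ → List Γ) : κ → ℕ → Option Γ := fun k n => (S k)[n]?

/-- Micro-step simulation. -/
def Sim (M : Λ → Stmt (fun _ : κ => Γ) Λ σ) (x : (Stmt (fun _ : κ => Γ) Λ σ × σ) × (κ → ℕ → Option Γ))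
    (c : Cfg (fun _ : κ => Γ) Λ σ) : Prop :=
  match c with
  | ⟨some l, v, S⟩ => ∃ n, mrun (micro M) x (n + 1) = some ((M l, v), embS S)
  | ⟨none, _, _⟩ => ∃ n, mrun (micro M) x n = none

theorem Sim.of_step (M : Λ → Stmt (fun _ : κ => Γ) Λ σ) (x y)
    (c : Cfg (fun _ : κ => Γ) Λ σ) (h : mstep (micro M) x = some y) (hy : Sim M y c) :
    Sim M x c := by
  rcases c with ⟨_ | l, v, S⟩ <;> obtain ⟨n, hn⟩ := hy <;> refine ⟨n + 1, ?_⟩ <;>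
    rw [mrun_succ_left, h] <;> exact hn

theorem sim (M : Λ → Stmt (fun _ : κ => Γ) Λ σ) (q : Stmt (fun _ : κ => Γ) Λ σ) (v : σ)
    (S : κ → List Γ) : Sim M ((q, v), embS S) (stepAux q v S) := by
  induction q generalizing v S with
  | push k f q ih =>
    refine Sim.of_step _ _ _ _ ?_ (ih v (Function.update S k (f v :: S k)))
    simp only [mstep, micro, Option.map_some, Option.some.injEq, Prod.mk.injEq, true_and]
    funext k' n
    by_cases hk : k' = k
    · subst hk; rcases n with _ | n <;> simp [Op.app, embS]
    · simp [hk, Op.app, embS]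
  | peek k f q ih =>
    refine Sim.of_step _ _ _ _ ?_ (ih (f v (S k).head?) S)
    simp only [mstep, micro, Option.map_some, Option.some.injEq, Prod.mk.injEq, true_and]
    simp [Op.app, embS, List.head?_eq_getElem?]
  | pop k f q ih =>
    refine Sim.of_step _ _ _ _ ?_ (ih (f v (S k).head?) (Function.update S k (S k).tail))
    simp only [mstep, micro, Option.map_some, Option.some.injEq, Prod.mk.injEq, true_and]
    refine ⟨by simp [embS, List.head?_eq_getElem?], ?_⟩
    funext k' n
    by_cases hk : k' = k
    · subst hk; simp [Op.app, embS]
    · simp [hk, Op.app, embS]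
  | load f q ih =>
    exact Sim.of_step _ _ _ _ (by rfl) (ih (f v) S)
  | branch f q₁ q₂ ih₁ ih₂ =>
    simp only [stepAux]
    cases h : f v
    · exact Sim.of_step _ _ _ _ (by simp [mstep, micro, h]; rfl) (ih₂ v S)
    · exact Sim.of_step _ _ _ _ (by simp [mstep, micro, h]; rfl) (ih₁ v S)
  | goto f => exact ⟨0, rfl⟩
  | halt => exact ⟨1, rfl⟩

theorem mrun_none_mono {Q κ Γ : Type} (δ : Q → (κ → Option Γ) → Option (Q × (κ → Op Γ))) (c)
    {m n : ℕ} (hmn : m ≤ n) (h : mrun δ c m = none) : mrun δ c n = none := by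
  obtain ⟨k, rfl⟩ := Nat.exists_eq_add_of_le hmn
  rw [mrun_add, h]; rfl

theorem micro_halts_of (M : Λ → Stmt (fun _ : κ => Γ) Λ σ) (c b : Cfg (fun _ : κ => Γ) Λ σ)
    (h : StateTransition.Reaches (TM2.step M) c b) (hb : TM2.step M b = none) :
    ∀ l v S, c = ⟨some l, v, S⟩ → ∃ n, mrun (micro M) ((M l, v), embS S) n = none := by
  induction h using Relation.ReflTransGen.head_induction_on with
  | refl => rintro l v S rfl; simp at hb
  | head h1 h2 ih =>
    rintro l v S rfl
    rename_i c'
    have hs := sim M (M l) v S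
    have e : stepAux (M l) v S = c' := by simpa using h1
    rw [e] at hs
    rcases c' with ⟨_ | l', v', S'⟩
    · exact hs
    · obtain ⟨n, hn⟩ := hs
      obtain ⟨m, hm⟩ := ih l' v' S' rfl
      exact ⟨n + 1 + m, by rw [mrun_add, hn]; exact hm⟩

theorem halts_of_micro (M : Λ → Stmt (fun _ : κ => Γ) Λ σ) (n : ℕ) : ∀ l v S,
    mrun (micro M) ((M l, v), embS S) n = none →
    ∃ b, StateTransition.Reaches (TM2.step M) ⟨some l, v, S⟩ b ∧ TM2.step M b = none := by
  induction n using Nat.strong_induction_on with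
  | _ n ih =>
    intro l v S h
    have hs := sim M (M l) v S
    rcases e : stepAux (M l) v S with ⟨_ | l', v', S'⟩
    · exact ⟨_, Relation.ReflTransGen.single (by simpa using e), rfl⟩
    · rw [e] at hs
      obtain ⟨m, hm⟩ := hs
      have hlt : m + 1 < n := by
        by_contra hc
        rw [mrun_none_mono _ _ (not_lt.1 hc) h] at hm; simp at hm
      have : mrun (micro M) ((M l', v'), embS S') (n - (m + 1)) = none := by
        have e2 : n = m + 1 + (n - (m + 1)) := by omega
        rw [e2, mrun_add, hm] at h
        exact h
      obtain ⟨b, hb, hb'⟩ := ih _ (by omega) _ _ _ this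
      exact ⟨b, Relation.ReflTransGen.head (by simpa using e) hb, hb'⟩


theorem exists_fin_machine [Inhabited Λ] [Finite σ] (M : Λ → Stmt (fun _ : κ => Γ) Λ σ) (S : Finset Λ)
    (hsup : TM2.Supports M S) (v0 : σ) : ∃ (Q : Type) (_ : Finite Q)
    (δ : Q → (κ → Option Γ) → Option (Q × (κ → Op Γ))) (q0 : Q),
    ∀ T : κ → List Γ, (StateTransition.eval (TM2.step M) ⟨some default, v0, T⟩).Dom ↔
      ∃ n, mrun δ (q0, embS T) n = none := by
  let QS : Set (Stmt (fun _ : κ => Γ) Λ σ × σ) := {x | some x.1 ∈ TM2.stmts M S}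
  have hfin : Finite QS := by
    have : QS = {s | some s ∈ TM2.stmts M S} ×ˢ Set.univ := by ext; simp [QS]
    rw [this]
    refine Set.Finite.prod ?_ Set.finite_univ
    exact Set.Finite.preimage (Option.some_injective _).injOn (TM2.stmts M S).finite_toSet
  have hmem : ∀ l ∈ S, some (M l) ∈ TM2.stmts M S := by
    intro l hl
    simp only [TM2.stmts, Finset.mem_insertNone, Finset.mem_biUnion, Option.mem_def,
      Option.some.injEq, forall_eq']
    exact ⟨l, hl, TM2.stmts₁_self⟩
  have hcl : ∀ q ∈ QS, ∀ a x, micro M q a = some x → x.1 ∈ QS := by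
    rintro ⟨q, v⟩ hq a x hx
    have hM : ∀ q', q' ∈ TM2.stmts₁ q → some q' ∈ TM2.stmts M S :=
      fun q' h' => TM2.stmts_trans h' hq
    cases q with
    | goto f =>
      simp only [micro, Option.some.injEq] at hx; subst hx
      exact hmem _ (TM2.stmts_supportsStmt hsup hq v)
    | halt => simp [micro] at hx
    | branch f q₁ q₂ =>
      simp only [micro, Option.some.injEq] at hx; subst hx
      refine hM _ ?_
      simp only [TM2.stmts₁]
      cases f v <;> simp [TM2.stmts₁_self]
    | _ =>
      simp only [micro, Option.some.injEq] at hx; subst hx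
      refine hM _ ?_
      simp [TM2.stmts₁, TM2.stmts₁_self]
  refine ⟨QS, hfin, restr (micro M) QS, ⟨(M default, v0), hmem _ hsup.1⟩, ?_⟩
  intro T
  have h3 : ∀ n, mrun (restr (micro M) QS) (⟨(M default, v0), hmem _ hsup.1⟩, embS T) n = none ↔
      mrun (micro M) ((M default, v0), embS T) n = none := by
    intro n
    rw [← mrun_restr (micro M) QS hcl ⟨(M default, v0), hmem _ hsup.1⟩,
      Option.map_eq_none_iff]
  simp only [h3]
  rw [Part.dom_iff_mem]
  constructor
  · rintro ⟨b, hb⟩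
    rw [StateTransition.mem_eval] at hb
    exact micro_halts_of M _ _ hb.1 hb.2 _ _ _ rfl
  · rintro ⟨n, hn⟩
    obtain ⟨b, hb, hb'⟩ := halts_of_micro M n _ _ _ hn
    exact ⟨b, StateTransition.mem_eval.2 ⟨hb, hb'⟩⟩

end

section
open Turing Turing.PartrecToTM2

theorem finite_K' : Finite K' := by
  refine Finite.of_surjective (fun n : Fin 4 => match n with
    | 0 => K'.main | 1 => K'.rev | 2 => K'.aux | 3 => K'.stack) ?_
  intro k
  cases k
  exacts [⟨0, rfl⟩, ⟨1, rfl⟩, ⟨2, rfl⟩, ⟨3, rfl⟩]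

/-- A universal stack machine. -/
theorem exists_machine : ∃ (Q : Type) (_ : Finite Q)
    (δ : Q → (K' → Option Γ') → Option (Q × (K' → Op Γ'))) (q0 : Q),
    ∀ c : Nat.Partrec.Code, (c.eval 0).Dom ↔
      ∃ n, mrun δ (minit q0 K'.main (trList [Encodable.encode c])) n = none := by
  have hp : Partrec fun v : List.Vector ℕ 1 =>
      ((Encodable.decode v.head : Option Nat.Partrec.Code) : Part Nat.Partrec.Code).bind
        fun c => c.eval 0 := by
    refine Partrec.bind (Computable.ofOption (Computable.decode.comp
      (Primrec.vector_head.to_comp))) ?_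
    exact Nat.Partrec.Code.eval_part.comp Computable.snd (Computable.const 0)
  obtain ⟨c, hc⟩ := Turing.ToPartrec.Code.exists_code (Nat.Partrec'.of_part hp)
  obtain ⟨Q, hQ, δ, q0, h⟩ := @exists_fin_machine K' Γ' Λ' (Option Γ') _ ⟨trNormal c Cont'.halt⟩ _ tr
    (codeSupp c Cont'.halt) (tr_supports c Cont'.halt) none
  refine ⟨Q, hQ, δ, q0, fun d => ?_⟩
  have h0 := tr_eval c [Encodable.encode d]
  have h1 : (d.eval 0).Dom ↔ (Turing.PartrecToTM2.halt <$>
      Turing.ToPartrec.Code.eval c [Encodable.encode d]).Dom := by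
    have := hc ⟨[Encodable.encode d], rfl⟩
    simp only at this
    rw [this]
    simp [List.Vector.head]
  have h2 : minit q0 K'.main (trList [Encodable.encode d]) =
      (q0, embS (K'.elim (trList [Encodable.encode d]) [] [] [])) := by
    simp only [minit, Prod.mk.injEq, true_and]
    funext k n
    cases k <;> simp [embS, K'.elim]
  rw [h1, h2, ← h0]
  exact h _

end

end AND

namespace AND

theorem SkelRule.congr {p K : ℕ} (hp : 3 ≤ p) {r u r' u' : ℕ → ZMod p} (h : SkelRule p K r u)
    (hr : ∀ v ≤ K, r v = r' v) (hu : ∀ v ≤ K, u v = u' v) : SkelRule p K r' u' := by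
  obtain ⟨h1, h2, h3, h4, h5⟩ := h
  refine ⟨fun v hv => ?_, fun v hv => ?_, fun v hv => ?_, fun v hv => ?_, fun v hv => ?_⟩
  · rw [← hu v hv]; exact h1 v hv
  · rw [← hu v hv, ← hr v hv]; exact h2 v hv
  · rw [← hr v (by omega), ← hr (v + 1) (by omega), ← hr (v + 2) (by omega)]; exact h3 v hv
  · rw [← hu v (by omega), ← hu (v + 1) (by omega), ← hu (v + 2) (by omega)]; exact h4 v hv
  · rw [← hu v (by omega), ← hu (v + 1) (by omega), ← hu (v + 2) (by omega),
      ← hu (v + 3) (by omega), ← hu (v + p) (by omega)]; exact h5 v hv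

theorem TRule.congr {Tl : Type} {V H : Tl → Tl → Prop} {seed : Tl → Prop} {p q K : ℕ}
    (hp : 3 ≤ p) (hq : 3 ≤ q) (hpK : 2 * p ≤ K) (hqK : 2 * q ≤ K)
    {r1 u1 r1' u1' : ℕ → ZMod p} {r2 u2 r2' u2' : ℕ → ZMod q} {T T' : ℕ → Tl}
    (h : TRule V H seed p q K r1 u1 r2 u2 T)
    (hr1 : ∀ v ≤ K, r1 v = r1' v) (hu1 : ∀ v ≤ K, u1 v = u1' v)
    (hr2 : ∀ v ≤ K, r2 v = r2' v) (hu2 : ∀ v ≤ K, u2 v = u2' v) (hT : ∀ v ≤ K, T v = T' v) :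
    TRule V H seed p q K r1' u1' r2' u2' T' := by
  obtain ⟨h1, h2, h3, h4⟩ := h
  have b1 : Base u1' ↔ Base u1 := by
    unfold Base
    rw [hu1 1 (by omega), hu1 2 (by omega), hu1 3 (by omega)]
  have b2 : Base u2' ↔ Base u2 := by
    unfold Base
    rw [hu2 1 (by omega), hu2 2 (by omega), hu2 3 (by omega)]
  refine ⟨fun e1 e2 v hv => ?_, ?_, ?_, ?_⟩
  · rw [← hT v hv, ← hT 0 (by omega)]
    exact h1 (fun v hv => by rw [hu1 v hv, hu1 0 (by omega)]; exact e1 v hv)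
      (fun v hv => by rw [hu2 v hv, hu2 0 (by omega)]; exact e2 v hv) v hv
  · rw [b1, b2, ← hu1 1 (by omega), ← hu1 p (by omega), ← hu1 (2 * p) (by omega),
      ← hT 1 (by omega), ← hT p (by omega)]; exact h2
  · rw [b1, b2, ← hu2 1 (by omega), ← hu2 q (by omega), ← hu2 (2 * q) (by omega),
      ← hT 1 (by omega), ← hT q (by omega)]; exact h3
  · rw [← hr1 1 (by omega), ← hr2 1 (by omega), ← hT 1 (by omega)]; exact h4

section
variable {Q κ Γ : Type}

/-- Finite part of a cell. -/
abbrev Cell (Q κ Γ : Type) := ZMod 5 × ZMod 5 × ZMod 7 × ZMod 7 × Tile0 Q κ Γ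

/-- Extension of a tuple to the natural numbers. -/
def ext15 {α : Type} (w : Fin 15 → α) : ℕ → α := fun v => w (Fin.ofNat 15 v)

/-- Local constraint in terms of decoded cells. -/
def LocC (δ : Q → (κ → Option Γ) → Option (Q × (κ → Op Γ))) (q0 : Q) (k0 : κ) (ℓ : List Γ)
    (C : ℕ → Cell Q κ Γ) (I : ℕ → ℕ) : Prop :=
  SkelRule 5 14 (fun v => (C v).1) (fun v => (C v).2.1) ∧
  SkelRule 7 14 (fun v => (C v).2.2.1) (fun v => (C v).2.2.2.1) ∧
  TRule (VR δ) (HR q0 k0 ℓ) seedR 5 7 14 (fun v => (C v).1) (fun v => (C v).2.1)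
    (fun v => (C v).2.2.1) (fun v => (C v).2.2.2.1) (fun v => ((C v).2.2.2.2, I v))

/-- Local constraint. -/
def LocD (a : ℕ) (da : ℕ → Cell Q κ Γ) (δ : Q → (κ → Option Γ) → Option (Q × (κ → Op Γ)))
    (q0 : Q) (k0 : κ) (ℓ : List Γ) (w : Fin 15 → ℕ) : Prop :=
  LocC δ q0 k0 ℓ (fun v => da (ext15 w v % a)) (fun v => ext15 w v / a)

/-- Adjacency constraint. -/
def AdjD (a : ℕ) (da : ℕ → Cell Q κ Γ) (d d' : ℕ) : Prop :=
  (da (d' % a)).1 = (da (d % a)).1 + 1 ∧ (da (d' % a)).2.2.1 = (da (d % a)).2.2.1 + 1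

theorem LocC.congr {δ : Q → (κ → Option Γ) → Option (Q × (κ → Op Γ))} {q0 : Q} {k0 : κ}
    {ℓ : List Γ} {C C' : ℕ → Cell Q κ Γ} {I I' : ℕ → ℕ} (h : LocC δ q0 k0 ℓ C I)
    (hC : ∀ v ≤ 14, C v = C' v) (hI : ∀ v ≤ 14, I v = I' v) : LocC δ q0 k0 ℓ C' I' := by
  obtain ⟨h1, h2, h3⟩ := h
  refine ⟨h1.congr (by norm_num) ?_ ?_, h2.congr (by norm_num) ?_ ?_,
    h3.congr (by norm_num) (by norm_num) (by norm_num) (by norm_num) ?_ ?_ ?_ ?_ ?_⟩ <;>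
  · intro v hv
    simp only [hC v hv, hI v hv]

theorem ext15_of_le {α : Type} (g : ℕ → α) (v : ℕ) (hv : v ≤ 14) :
    ext15 (fun w : Fin 15 => g w) v = g v := by
  simp only [ext15, Fin.val_ofNat]
  rw [Nat.mod_eq_of_lt (by omega)]

variable [DecidableEq κ]

instance fact_prime_five : Fact (Nat.Prime 5) := ⟨by norm_num⟩

instance fact_prime_seven : Fact (Nat.Prime 7) := ⟨by norm_num⟩

theorem tracks_iff (a : ℕ) (da : ℕ → Cell Q κ Γ) (ea : Cell Q κ Γ → ℕ) (hea : ∀ x, ea x < a)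
    (hde : ∀ x, da (ea x) = x)
    (δ : Q → (κ → Option Γ) → Option (Q × (κ → Op Γ))) (q0 : Q) (k0 : κ) (ℓ : List Γ) :
    (∃ g : ℕ → ℤ → ℕ, (∀ v m, g v m < a * (ℓ.length + 1)) ∧
      (∀ m d : ℤ, 0 ≤ d → LocD a da δ q0 k0 ℓ (fun v : Fin 15 => g v (m + v * d))) ∧
      (∀ v < 15, ∀ m, AdjD a da (g v m) (g v (m + 1)))) ↔
    ¬ ∃ n, mrun δ (minit q0 k0 ℓ) n = none := by
  constructor
  · rintro ⟨g, -, hL, hA⟩ ⟨n, hn⟩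
    have hL' : ∀ m d : ℤ, 0 ≤ d → LocC δ q0 k0 ℓ (fun v => da (g v (m + v * d) % a))
        (fun v => g v (m + v * d) / a) := by
      intro m d hd
      refine (hL m d hd).congr ?_ ?_ <;> intro v hv <;> 
        rw [ext15_of_le (fun v : ℕ => g v (m + v * d)) v hv]
    obtain ⟨tile, hs, hVH⟩ := tile_extract (VR δ) (HR q0 k0 ℓ) seedR (p := 5) (q := 7) (K := 14)
      (by norm_num) (by norm_num) (by norm_num) (by norm_num) (by norm_num)
      (fun v m => (da (g v m % a)).1) (fun v m => (da (g v m % a)).2.1)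
      (fun v m => (da (g v m % a)).2.2.1) (fun v m => (da (g v m % a)).2.2.2.1)
      (fun v m => ((da (g v m % a)).2.2.2.2, g v m / a))
      (fun v hv m => (hA v (by omega) m).1) (fun v hv m => (hA v (by omega) m).2)
      (fun m d hd => (hL' m d hd).1) (fun m d hd => (hL' m d hd).2.1)
      (fun m d hd => (hL' m d hd).2.2) (n + 1)
    obtain ⟨c, hc⟩ := run_of_tiles (n + 1) tile hs hVH n (by omega)
    rw [hn] at hc; simp at hc
  · intro h
    have h' : ∀ τ, ∃ c, mrun δ (minit q0 k0 ℓ) τ = some c := fun τ =>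
      Option.ne_none_iff_exists'.1 fun hn => h ⟨τ, hn⟩
    obtain ⟨tile, hs, hVH, hlen⟩ := tiles_of_run h'
    obtain ⟨r1, u1, r2, u2, T, hr1, hr2, hR1, hR2, hT, hTt⟩ := tile_true (VR δ) (HR q0 k0 ℓ) seedR
      (p := 5) (q := 7) (K := 14) (by norm_num) (by norm_num) (by norm_num) (by norm_num)
      (by norm_num) tile hs hVH
    set X : ℕ → ℤ → Cell Q κ Γ := fun v m => (r1 v m, u1 v m, r2 v m, u2 v m, (T v m).1) with hX
    set g : ℕ → ℤ → ℕ := fun v m => ea (X v m) + a * (T v m).2 with hg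
    have hm : ∀ v m, g v m % a = ea (X v m) := fun v m => by
      rw [hg]; simp only [Nat.add_mul_mod_self_left]; exact Nat.mod_eq_of_lt (hea _)
    have hd : ∀ v m, g v m / a = (T v m).2 := fun v m => by
      have ha : 0 < a := lt_of_le_of_lt (Nat.zero_le _) (hea (X v m))
      rw [hg]; simp only [Nat.add_mul_div_left _ _ ha, Nat.div_eq_of_lt (hea _), zero_add]
    refine ⟨g, ?_, ?_, ?_⟩
    · intro v m
      obtain ⟨τ, σ, e⟩ := hTt v m
      have h1 := hlen τ σ
      rw [← e] at h1
      have h2 := hea (X v m)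
      calc g v m = ea (X v m) + a * (T v m).2 := rfl
        _ < a + a * (T v m).2 := by omega
        _ = a * ((T v m).2 + 1) := by ring
        _ ≤ _ := Nat.mul_le_mul_left _ h1
    · intro m d hd0
      have : LocC δ q0 k0 ℓ (fun v => da (g v (m + v * d) % a)) (fun v => g v (m + v * d) / a) := by
        simp only [hm, hd, hde, hX]
        exact ⟨hR1 m d hd0, hR2 m d hd0, hT m d hd0⟩
      refine this.congr ?_ ?_ <;> intro v hv <;>
        rw [ext15_of_le (fun v : ℕ => g v (m + v * d)) v hv]
    · intro v _ m
      simp only [AdjD, hm, hde, hX]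
      exact ⟨hr1 v m, hr2 v m⟩

end

end AND

namespace AND
open Encodable

theorem encode_list_map {α : Type} [Encodable α] (l : List α) :
    encode l = encode (l.map (fun x => encode x)) := by
  induction l with
  | nil => rfl
  | cons x l ih => simp only [List.map_cons, Encodable.encode_list_cons, ih]; rfl

theorem encode_vector {α : Type} [Encodable α] {n : ℕ} (v : List.Vector α n) :
    encode v = encode v.1 := by
  rfl

theorem encode_finArrow {α : Type} [Encodable α] {n : ℕ} (f : Fin n → α) :
    @encode _ (Encodable.finArrow) f = encode (List.ofFn f) := by
  have : @encode _ (Encodable.finArrow) f = encode (List.Vector.ofFn f) := rfl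
  rw [this, encode_vector]
  congr 1
  exact List.Vector.toList_ofFn f

theorem encode_finPi {α : Type} [Encodable α] {n : ℕ} (f : Fin n → α) :
    @encode _ (Encodable.finPi n (fun _ => α)) f =
      encode (List.ofFn (fun i : Fin n => Nat.pair i (encode (f i)))) := by
  have h : @encode _ (Encodable.finPi n (fun _ => α)) f =
    @encode _ Encodable.finArrow (fun i : Fin n => (⟨i, f i⟩ : Σ _ : Fin n, α)) := rfl
  rw [h, encode_finArrow, encode_list_map, List.map_ofFn]
  rfl

theorem encode_arrow {α β : Type} [Fintype α] [Encodable α] [Encodable β] (f : α → β) :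
    @encode _ (Encodable.fintypeArrowOfEncodable) f =
      encode ((sortedUniv α).mapIdx fun i x => Nat.pair i (encode (f x))) := by
  have h : @encode _ (Encodable.fintypeArrowOfEncodable) f =
    encode ((List.ofFn (fun i => Nat.pair i (encode (f (fintypeEquivFin.symm i)))))) := by
    rw [← encode_finPi (fun i => f (fintypeEquivFin.symm i))]
    refine (Encodable.encode_ofEquiv (fintypeEquivFin.arrowCongr (Equiv.refl β)) f).trans ?_
    congr 1
  rw [h]
  congr 1
  apply List.ext_getElem
  · simp
  · intro i h1 h2
    simp only [List.getElem_ofFn, List.getElem_mapIdx]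
    congr 3
    rw [Equiv.symm_apply_eq]
    simp only [fintypeEquivFin, Equiv.trans_apply]
    have : ∀ (n : ℕ) (h : Fin (sortedUniv α).length = Fin n) (hh : (sortedUniv α).length = n)
        (j : Fin (sortedUniv α).length), Equiv.cast h j = Fin.cast hh j := by
      intro n h hh j; subst hh; rfl
    rw [this _ _ (length_sortedUniv α)]
    ext
    simp only [Fin.val_cast]
    have h3 : i < (sortedUniv α).length := by simpa using h2
    have := Equiv.symm_apply_apply (@List.Nodup.getEquivOfForallMemList _
      (decidableEqOfEncodable α) (sortedUniv α) (sortedUniv_nodup α) mem_sortedUniv) ⟨i, h3⟩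
    exact (congrArg Fin.val this).symm

/-- The list of codes of triples below `m`. -/
def codes (m : ℕ) : List ℕ :=
  (List.range (Nat.pair m (Nat.pair m m))).filter
    fun c => decide (c.unpair.1 < m) && decide (c.unpair.2.unpair.1 < m) && decide (c.unpair.2.unpair.2 < m)

theorem sortedUniv_codes (m : ℕ) :
    (sortedUniv (Fin m × Fin m × Fin m)).map (fun x => encode x) = codes m := by
  apply List.Pairwise.eq_of_mem_iff (r := (· < ·))
  · rw [List.pairwise_map]
    have h1 := Finset.pairwise_sort (Finset.univ : Finset (Fin m × Fin m × Fin m)) (Encodable.encode' _ ⁻¹'o (· ≤ ·))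
    have h2 := sortedUniv_nodup (Fin m × Fin m × Fin m)
    refine (List.Pairwise.and h1 h2).imp ?_
    rintro a b ⟨h, h'⟩
    exact lt_of_le_of_ne h fun e => h' (Encodable.encode_injective e)
  · exact List.Pairwise.filter _ List.pairwise_lt_range
  · intro c
    simp only [codes, List.mem_map, mem_sortedUniv, true_and, List.mem_filter, List.mem_range,
      Bool.and_eq_true, decide_eq_true_eq]
    constructor
    · rintro ⟨⟨x, y, z⟩, rfl⟩
      simp only [Encodable.encode_prod_val, Nat.unpair_pair]
      refine ⟨?_, ⟨x.2, y.2⟩, z.2⟩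
      calc _ < Nat.pair m (Nat.pair y z) := Nat.pair_lt_pair_left _ x.2
        _ < Nat.pair m (Nat.pair m z) := Nat.pair_lt_pair_right _ (Nat.pair_lt_pair_left _ y.2)
        _ < Nat.pair m (Nat.pair m m) := Nat.pair_lt_pair_right _ (Nat.pair_lt_pair_right _ z.2)
    · rintro ⟨-, ⟨hx, hy⟩, hz⟩
      refine ⟨(⟨_, hx⟩, ⟨_, hy⟩, ⟨_, hz⟩), ?_⟩
      simp only [Encodable.encode_prod_val]
      change Nat.pair c.unpair.1 (Nat.pair c.unpair.2.unpair.1 c.unpair.2.unpair.2) = c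
      rw [Nat.pair_unpair, Nat.pair_unpair]

theorem encode_rule (n : ℕ) (f : Fin (n + 1) × Fin (n + 1) × Fin (n + 1) → Fin (n + 1))
    (F : ℕ → ℕ → ℕ) (hF : ∀ x, (f x : ℕ) = F x.2.1 x.2.2) :
    encode (⟨n, f⟩ : Σ n : ℕ, (Fin (n + 1) × Fin (n + 1) × Fin (n + 1) → Fin (n + 1))) =
      Nat.pair n (encode ((List.range (codes (n + 1)).length).map fun i =>
        Nat.pair i (F ((codes (n + 1)).getD i 0).unpair.2.unpair.1
          ((codes (n + 1)).getD i 0).unpair.2.unpair.2))) := by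
  have h : encode (⟨n, f⟩ : Σ n : ℕ, (Fin (n + 1) × Fin (n + 1) × Fin (n + 1) → Fin (n + 1))) =
    Nat.pair n (encode f) := rfl
  rw [h, encode_arrow]
  congr 2
  apply List.ext_getElem
  · rw [← sortedUniv_codes]; simp
  · intro i h1 h2
    have h3 : i < (codes (n + 1)).length := by simpa using h2
    have h4 : i < (sortedUniv (Fin (n + 1) × Fin (n + 1) × Fin (n + 1))).length := by
      simpa using h1
    have h5 : (codes (n + 1)).getD i 0 =
        encode ((sortedUniv (Fin (n + 1) × Fin (n + 1) × Fin (n + 1)))[i]) := by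
      rw [← List.getElem_eq_getD (h := h3)]
      simp only [← sortedUniv_codes, List.getElem_map]
    simp only [List.getElem_mapIdx, List.getElem_map, List.getElem_range, h5]
    generalize (sortedUniv (Fin (n + 1) × Fin (n + 1) × Fin (n + 1)))[i] = x
    obtain ⟨x, y, z⟩ := x
    simp only [Encodable.encode_prod_val, Nat.unpair_pair]
    exact congrArg _ (hF (x, y, z))

theorem codes_primrec : Primrec codes := by
  have hp : Primrec fun m : ℕ => Nat.pair m (Nat.pair m m) :=
    Primrec₂.natPair.comp Primrec.id (Primrec₂.natPair.comp Primrec.id Primrec.id)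
  have h : codes = fun m => (List.range (Nat.pair m (Nat.pair m m))).flatMap fun c =>
      cond (decide (c.unpair.1 < m) && decide (c.unpair.2.unpair.1 < m) &&
        decide (c.unpair.2.unpair.2 < m)) [c] [] := by
    funext m
    unfold codes
    generalize List.range _ = L
    induction L with
    | nil => rfl
    | cons x L ih => 
      rw [List.flatMap_cons, ← ih, List.filter_cons]
      split_ifs with h <;> simp [h]
  rw [h]
  refine Primrec.list_flatMap (Primrec.list_range.comp hp) ?_
  have hu : Primrec fun x : ℕ × ℕ => x.2.unpair := Primrec.unpair.comp Primrec.snd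
  have hu2 : Primrec fun x : ℕ × ℕ => x.2.unpair.2.unpair := Primrec.unpair.comp (Primrec.snd.comp hu)
  refine Primrec.cond (Primrec.and.comp (Primrec.and.comp ?_ ?_) ?_)
    (Primrec.list_cons.comp Primrec.snd (Primrec.const [])) (Primrec.const [])
  · exact (Primrec.nat_lt.comp (Primrec.fst.comp hu) Primrec.fst).decide
  · exact (Primrec.nat_lt.comp (Primrec.fst.comp hu2) Primrec.fst).decide
  · exact (Primrec.nat_lt.comp (Primrec.snd.comp hu2) Primrec.fst).decide

end AND

namespace AND
open Encodable

section
variable {α : Type} [Primcodable α]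

theorem enc_primrec (N : α → ℕ) (hN : Primrec N) (F : α → ℕ → ℕ → ℕ)
    (hF : Primrec fun x : α × ℕ × ℕ => F x.1 x.2.1 x.2.2) :
    Primrec fun a => Nat.pair (N a) (encode ((List.range (codes (N a + 1)).length).map fun i =>
        Nat.pair i (F a ((codes (N a + 1)).getD i 0).unpair.2.unpair.1
          ((codes (N a + 1)).getD i 0).unpair.2.unpair.2))) := by
  have hc : Primrec fun a => codes (N a + 1) := codes_primrec.comp (Primrec.succ.comp hN)
  refine Primrec₂.natPair.comp hN (Primrec.encode.comp ?_)
  refine Primrec.list_map (Primrec.list_range.comp (Primrec.list_length.comp hc)) ?_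
  have hg : Primrec fun x : α × ℕ => ((codes (N x.1 + 1)).getD x.2 0).unpair.2.unpair :=
    Primrec.unpair.comp (Primrec.snd.comp (Primrec.unpair.comp
      ((Primrec.list_getD 0).comp (hc.comp Primrec.fst) Primrec.snd)))
  refine Primrec₂.natPair.comp Primrec.snd ?_
  exact hF.comp (Primrec.fst.pair ((Primrec.fst.comp hg).pair (Primrec.snd.comp hg)))

theorem pow_primrec : Primrec₂ fun a n : ℕ => a ^ n :=
  Primrec₂.unpaired'.1 Nat.Primrec.pow

theorem pred_imp {p q : α → Prop} (hp : PrimrecPred p) (hq : PrimrecPred q) :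
    PrimrecPred fun x => p x → q x := by
  classical
  exact (hp.not.or hq).of_eq fun x => (imp_iff_not_or).symm

theorem pred_const (p : Prop) : PrimrecPred fun _ : α => p := by
  classical
  exact PrimrecPred.of_eq (p := fun _ : α => (decide p) = true)
    (Primrec.eq.comp (Primrec.const (decide p)) (Primrec.const true)) (by simp)

theorem pred_forall {n : ℕ} {p : Fin n → α → Prop} (hp : ∀ i, PrimrecPred (p i)) :
    PrimrecPred fun x => ∀ i, p i x := by
  induction n with
  | zero => exact (pred_const True).of_eq (by simp)
  | succ n ih =>
    exact ((hp 0).and (ih fun i => hp i.succ)).of_eq fun x => by rw [Fin.forall_fin_succ]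

theorem sum_primrec (n : ℕ) {f : ℕ → α → ℕ} (hf : ∀ i, Primrec (f i)) :
    Primrec fun x => ∑ j ∈ Finset.range n, f j x := by
  induction n with
  | zero => simpa using Primrec.const 0
  | succ n ih =>
    simp only [Finset.sum_range_succ]
    exact Primrec.nat_add.comp ih (hf n)

theorem tup_primrec {a n : ℕ} (ha : 0 < a) {w : Fin n → α → ℕ} (hw : ∀ v, Primrec (w v)) :
    Primrec fun x => (fun v => ⟨w v x % a, Nat.mod_lt _ ha⟩ : Fin n → Fin a) := by
  refine Primrec.fin_curry.2 (Primrec₂.swap (Primrec.fin_curry₁.2 fun v => ?_))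
  exact Primrec.fin_val_iff.1 (Primrec.nat_mod.comp (hw v) (Primrec.const a))

theorem fin_pred {a n : ℕ} (ha : 0 < a) {w : Fin n → α → ℕ} (hw : ∀ v, Primrec (w v))
    (P : (Fin n → Fin a) → Prop) :
    PrimrecPred fun x => P (fun v => ⟨w v x % a, Nat.mod_lt _ ha⟩) := by
  classical
  refine PrimrecPred.of_eq (p := fun x => (decide (P (fun v => ⟨w v x % a, Nat.mod_lt _ ha⟩))) = true)
    ?_ (by simp)
  exact Primrec.eq.comp ((Primrec.dom_finite fun y => decide (P y)).comp (tup_primrec ha hw))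
    (Primrec.const true)

theorem fin_fun {a n : ℕ} (ha : 0 < a) {w : Fin n → α → ℕ} (hw : ∀ v, Primrec (w v))
    {σ : Type} [Primcodable σ] (P : (Fin n → Fin a) → σ) :
    Primrec fun x => P (fun v => ⟨w v x % a, Nat.mod_lt _ ha⟩) :=
  (Primrec.dom_finite P).comp (tup_primrec ha hw)

theorem dig_primrec {B s : α → ℕ} (hB : Primrec B) (hs : Primrec s) (i : ℕ) :
    Primrec fun x => dig (B x) (s x) i :=
  Primrec.nat_mod.comp (Primrec.nat_div.comp hs (pow_primrec.comp hB (Primrec.const i))) hB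

theorem nd_primrec {B c r : α → ℕ} (hB : Primrec B) (hc : Primrec c) (hr : Primrec r) (i : ℕ) :
    Primrec fun x => nd (B x) (c x) (r x) i := by
  unfold nd
  split_ifs
  · exact dig_primrec hB hc _
  · exact dig_primrec hB hr _

theorem ruleN_primrec {β : Type} (Loc : β → (Fin 15 → ℕ) → Prop) (Adj : ℕ → ℕ → Prop) (b : α → β)
    {B c r : α → ℕ}
    (hLoc : ∀ w : Fin 15 → α → ℕ, (∀ v, Primrec (w v)) →
      PrimrecPred fun x => Loc (b x) (fun v => w v x))
    (hAdj : ∀ d d' : α → ℕ, Primrec d → Primrec d' → PrimrecPred fun x => Adj (d x) (d' x))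
    (hB : Primrec B) (hc : Primrec c) (hr : Primrec r) :
    Primrec fun x => ruleN (Loc (b x)) Adj (B x) (c x) (r x) := by
  classical
  have hc1 : Primrec fun x => c x - 1 := Primrec.nat_sub.comp hc (Primrec.const 1)
  have hr1 : Primrec fun x => r x - 1 := Primrec.nat_sub.comp hr (Primrec.const 1)
  unfold ruleN
  refine Primrec.ite (PrimrecPred.and ?_ (PrimrecPred.and ?_ ?_)) ?_ (Primrec.const 0)
  · exact (Primrec.eq.comp hc (Primrec.const 0)).not
  · exact (Primrec.eq.comp hr (Primrec.const 0)).not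
  · unfold okc
    refine PrimrecPred.and (pred_forall fun s => hLoc _ fun v => dig_primrec hB hc1 _)
      (pred_forall fun s => pred_forall fun v => ?_)
    refine hAdj _ _ (dig_primrec hB hc1 _) ?_
    split_ifs
    · exact dig_primrec hB hc1 _
    · exact dig_primrec hB hr1 _
  · unfold undig
    refine Primrec.nat_add.comp (Primrec.const 1) (sum_primrec 225 fun i => ?_)
    exact Primrec.nat_mul.comp (nd_primrec hB hc1 hr1 i) (pow_primrec.comp hB (Primrec.const i))

variable {Q κ Γ : Type} [Primcodable Γ]

theorem LocD_primrec {a : ℕ} (ha : 0 < a) (da : ℕ → Cell Q κ Γ)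
    (δ : Q → (κ → Option Γ) → Option (Q × (κ → Op Γ))) (q0 : Q) (k0 : κ) (ℓ : α → List Γ)
    (hℓ : Primrec ℓ) (w : Fin 15 → α → ℕ) (hw : ∀ v, Primrec (w v)) :
    PrimrecPred fun x => LocD a da δ q0 k0 (ℓ x) (fun v => w v x) := by
  classical
  have hI : ∀ v, Primrec fun x => ext15 (fun v => w v x) v / a := fun v =>
    Primrec.nat_div.comp (hw _) (Primrec.const a)
  unfold LocD LocC TRule
  have hfp : ∀ P : (ℕ → Cell Q κ Γ) → Prop,
      PrimrecPred fun x => P (fun v => da (ext15 (fun v => w v x) v % a)) :=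
    fun P => fin_pred ha hw (fun y => P (fun v => da (ext15 (fun i => (y i : ℕ)) v)))
  have hff : ∀ P : (ℕ → Cell Q κ Γ) → Option Γ,
      Primrec fun x => P (fun v => da (ext15 (fun v => w v x) v % a)) :=
    fun P => fin_fun ha hw (fun y => P (fun v => da (ext15 (fun i => (y i : ℕ)) v)))
  refine PrimrecPred.and ?_ (PrimrecPred.and ?_ (PrimrecPred.and ?_ (PrimrecPred.and ?_
    (PrimrecPred.and ?_ ?_))))
  · exact hfp (fun y => SkelRule 5 14 (fun v => (y v).1) (fun v => (y v).2.1))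
  · exact hfp (fun y => SkelRule 7 14 (fun v => (y v).2.2.1)
      (fun v => (y v).2.2.2.1))
  · refine pred_imp (hfp fun y => ∀ v ≤ 14, (y v).2.1 = (y 0).2.1)
      (pred_imp (hfp fun y => ∀ v ≤ 14, (y v).2.2.2.1 = (y 0).2.2.2.1) ?_)
    refine PrimrecPred.of_eq ((hfp fun y => ∀ v ≤ 14, (y v).2.2.2.2 =
      (y 0).2.2.2.2).and (pred_forall (n := 15) (p := fun v x =>
        ext15 (fun v => w v x) v / a = ext15 (fun v => w v x) 0 / a)
        fun v => Primrec.eq.comp (hI v) (hI 0))) ?_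
    intro x
    constructor
    · rintro ⟨h1, h2⟩ v hv
      exact Prod.ext (h1 v hv) (h2 ⟨v, by omega⟩)
    · intro h
      exact ⟨fun v hv => congrArg Prod.fst (h v hv),
        fun v => congrArg Prod.snd (h v (by omega))⟩
  · refine pred_imp (hfp fun y => Base fun v => (y v).2.1)
      (pred_imp (hfp fun y => Base fun v => (y v).2.2.2.1)
      (pred_imp (hfp fun y => (y 5).2.1 = (y 1).2.1)
      (pred_imp (hfp fun y => (y (2 * 5)).2.1 = 2 * (y 1).2.1)
      (PrimrecPred.and (hfp fun y => V0 δ (y 1).2.2.2.2 (y 5).2.2.2.2) ?_))))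
    exact Primrec.eq.comp (hI 5) (hI 1)
  · refine pred_imp (hfp fun y => Base fun v => (y v).2.1)
      (pred_imp (hfp fun y => Base fun v => (y v).2.2.2.1)
      (pred_imp (hfp fun y => (y 7).2.2.2.1 = (y 1).2.2.2.1)
      (pred_imp (hfp fun y => (y (2 * 7)).2.2.2.1 = 2 * (y 1).2.2.2.1)
      (PrimrecPred.and (hfp fun y => H0 q0 k0 (y 1).2.2.2.2 (y 7).2.2.2.2)
      (PrimrecPred.and ?_ (pred_imp (hfp fun y => (y 1).2.2.2.2.b = true) ?_))))))
    · exact Primrec.eq.comp (hI 7) (Primrec.nat_min.comp (Primrec.succ.comp (hI 1))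
        (Primrec.list_length.comp hℓ))
    · exact Primrec.eq.comp (hff fun y => (y 1).2.2.2.2.cur k0)
        (Primrec.list_getElem?.comp hℓ (hI 1))
  · refine pred_imp (hfp fun y => (y 1).1 ≠ 0)
      (pred_imp (hfp fun y => (y 1).2.2.1 ≠ 0)
      (PrimrecPred.and (hfp fun y => seed0 (y 1).2.2.2.2) ?_))
    exact Primrec.eq.comp (hI 1) (Primrec.const 0)

theorem AdjD_primrec {a : ℕ} (ha : 0 < a) (da : ℕ → Cell Q κ Γ) (d d' : α → ℕ)
    (hd : Primrec d) (hd' : Primrec d') : PrimrecPred fun x => AdjD a da (d x) (d' x) := by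
  have hw : ∀ v : Fin 2, Primrec ((![d, d'] : Fin 2 → α → ℕ) v) := by
    intro v; fin_cases v
    · exact hd
    · exact hd'
  exact fin_pred ha hw fun y => (da (y 1)).1 = (da (y 0)).1 + 1 ∧
    (da (y 1)).2.2.1 = (da (y 0)).2.2.1 + 1

end

end AND

namespace AND
open Encodable
open Turing.PartrecToTM2

theorem finite_Tile0 {Q κ Γ : Type} [Finite Q] [Finite κ] [Finite Γ] : Finite (Tile0 Q κ Γ) := by
  refine Finite.of_injective (fun t : Tile0 Q κ Γ =>
    (t.flag, t.b, t.q, t.tops, t.prev, t.cur, t.next)) ?_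
  rintro ⟨⟩ ⟨⟩ h
  simp only [Prod.mk.injEq] at h
  obtain ⟨rfl, rfl, rfl, rfl, rfl, rfl, rfl⟩ := h
  rfl

/-- An effective encoding of the alphabet. -/
noncomputable instance primcodable_Gamma : Primcodable Γ' :=
  Primcodable.ofEquiv (Fin (Fintype.card Γ')) (Fintype.equivFin Γ')

theorem trNat_rec (n : ℕ) (hn : n ≠ 0) :
    trNat n = (if n % 2 = 0 then Γ'.bit0 else Γ'.bit1) :: trNat (n / 2) := by
  have h1 : ∀ m : Num, trNum (Num.bit1 m) = Γ'.bit1 :: trNum m := by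
    intro m; cases m <;> rfl
  have h0 : ∀ m : Num, m ≠ 0 → trNum (Num.bit0 m) = Γ'.bit0 :: trNum m := by
    intro m hm; cases m
    · exact absurd rfl hm
    · rfl
  have hb : ∀ b m, ((Nat.bit b m : ℕ) : Num) = cond b Num.bit1 Num.bit0 (m : Num) := by
    intro b m
    have := Num.ofNat'_bit b m
    simpa only [Num.ofNat'_eq] using this
  have e : n = Nat.bit (n.bodd) n.div2 := (Nat.bit_bodd_div2 n).symm
  unfold trNat
  rw [Nat.mod_two_of_bodd]
  rw [← Nat.div2_val]
  conv_lhs => rw [e, hb]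
  cases hbb : n.bodd
  · have : (n.div2 : Num) ≠ 0 := by
      intro h0
      have : n.div2 = 0 := by exact_mod_cast h0
      rw [this, hbb] at e
      exact hn e
    simpa using h0 _ this
  · simpa using h1 _

theorem trNat_primrec : Primrec trNat := by
  classical
  have hlast : Primrec fun L : List (List Γ') =>
      (if L.length = 0 then [] else
      (if L.length % 2 = 0 then Γ'.bit0 else Γ'.bit1) :: L.getD (L.length / 2) [] : List Γ') := by
    have hl : Primrec fun L : List (List Γ') => L.length := Primrec.list_length
    refine Primrec.ite (Primrec.eq.comp hl (Primrec.const 0)) (Primrec.const []) ?_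
    refine Primrec.list_cons.comp (Primrec.ite (Primrec.eq.comp
      (Primrec.nat_mod.comp hl (Primrec.const 2)) (Primrec.const 0)) (Primrec.const _)
      (Primrec.const _)) ?_
    exact (Primrec.list_getD []).comp Primrec.id (Primrec.nat_div.comp hl (Primrec.const 2))
  have := Primrec.nat_strong_rec (α := Unit) (fun _ n => trNat n)
    (g := fun _ L => some (if L.length = 0 then [] else
      (if L.length % 2 = 0 then Γ'.bit0 else Γ'.bit1) :: L.getD (L.length / 2) [] : List Γ'))
    (Primrec.option_some.comp (hlast.comp Primrec.snd)) (by
      intro _ n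
      simp only [List.length_map, List.length_range, Option.some.injEq]
      split_ifs with h1 h2
      · subst h1; simp [trNat_zero]
      all_goals
        rw [trNat_rec n h1]
        have : n / 2 < n := Nat.div_lt_self (Nat.pos_of_ne_zero h1) (by norm_num)
        simp [h2, List.getD_eq_getElem?_getD, this])
  exact this.comp (Primrec.const ()) Primrec.id

theorem trList_primrec : Primrec fun n : ℕ => trList [n] := by
  have : (fun n : ℕ => trList [n]) = fun n => trNat n ++ [Γ'.cons] := by
    funext n; simp [trList]
  rw [this]
  exact Primrec.list_append.comp trNat_primrec (Primrec.const _)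

theorem code_primrec {α : Type} [Primcodable α] (N : α → ℕ) (hN : Primrec N)
    (f : ∀ c, Fin (N c + 1) × Fin (N c + 1) × Fin (N c + 1) → Fin (N c + 1))
    (F : α → ℕ → ℕ → ℕ) (hF : Primrec fun x : α × ℕ × ℕ => F x.1 x.2.1 x.2.2)
    (h : ∀ c x, (f c x : ℕ) = F c x.2.1 x.2.2) :
    Primrec fun c => encode (⟨N c, f c⟩ :
      Σ n : ℕ, (Fin (n + 1) × Fin (n + 1) × Fin (n + 1) → Fin (n + 1))) := by
  have he := fun c => encode_rule (N c) (f c) (F c) (h c)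
  simp only [he]
  exact enc_primrec N hN F hF

theorem rule_code_primrec {α : Type} [Primcodable α] (B : α → ℕ) (hB : Primrec B)
    (hpos : ∀ c, 0 < B c) (Loc : α → (Fin 15 → ℕ) → Prop) (Adj : ℕ → ℕ → Prop)
    (hR : Primrec fun x : α × ℕ × ℕ => ruleN (Loc x.1) Adj (B x.1) x.2.1 x.2.2) :
    Primrec fun c => encode (⟨B c ^ 225, rule (Loc c) Adj (B c)⟩ :
      Σ n : ℕ, (Fin (n + 1) × Fin (n + 1) × Fin (n + 1) → Fin (n + 1))) :=
  code_primrec (fun c => B c ^ 225) (pow_primrec.comp hB (Primrec.const 225))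
    (fun c => rule (Loc c) Adj (B c)) (fun c => ruleN (Loc c) Adj (B c)) hR
    (fun c x => rule_val (hpos c) x)

theorem final_primrec {α Q κ Γ : Type} [Primcodable α] [Primcodable Γ] [Finite Q] [Finite κ]
    [Finite Γ] {a : ℕ} (ha : 0 < a) (da : ℕ → Cell Q κ Γ)
    (δ : Q → (κ → Option Γ) → Option (Q × (κ → Op Γ))) (q0 : Q) (k0 : κ) (ℓ : α → List Γ)
    (hℓ : Primrec ℓ) (B : α → ℕ) (hB : Primrec B) (hpos : ∀ c, 0 < B c) :
    Primrec fun c => encode (⟨B c ^ 225, rule (LocD a da δ q0 k0 (ℓ c)) (AdjD a da) (B c)⟩ :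
      Σ n : ℕ, (Fin (n + 1) × Fin (n + 1) × Fin (n + 1) → Fin (n + 1))) := by
  refine rule_code_primrec B hB hpos (fun c => LocD a da δ q0 k0 (ℓ c)) (AdjD a da) ?_
  refine ruleN_primrec (fun c => LocD a da δ q0 k0 (ℓ c)) (AdjD a da)
    (fun x : α × ℕ × ℕ => x.1) ?_ ?_
    (hB.comp Primrec.fst) (Primrec.fst.comp Primrec.snd) (Primrec.snd.comp Primrec.snd)
  · intro w hw
    have h1 : Primrec fun x : α × ℕ × ℕ => ℓ x.1 := hℓ.comp Primrec.fst
    exact LocD_primrec ha da δ q0 k0 (fun x : α × ℕ × ℕ => ℓ x.1) h1 w hw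
  · intro d d' hd hd'
    exact AdjD_primrec ha da d d' hd hd'

end AND

/-- Asymptotic nilpotency in density of cellular automata is
undecidable: there is no total computable function `g` from (the effective encoding
of) codes `(n, f)` of radius-1 cellular automata to `Bool` such that
`g (n, f) = true` iff `Φ_{n,f}` is asymptotically nilpotent in density. -/
theorem asymptoticallyNilpotentInDensity_undecidable :
    ¬ ∃ g : ℕ → Bool, Computable g ∧
      ∀ (n : ℕ) (f : Fin (n + 1) × Fin (n + 1) × Fin (n + 1) → Fin (n + 1)),
        f (0, 0, 0) = 0 →
        (g (Encodable.encode
            (⟨n, f⟩ : Σ n : ℕ, (Fin (n + 1) × Fin (n + 1) × Fin (n + 1) → Fin (n + 1))))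
            = true ↔
          (∀ ε : ℝ, 0 < ε → ∃ k : ℕ, ∀ x : ℤ → Fin (n + 1),
            besicovitchDist ((caOfRule f)^[k] x) (fun _ => 0) < ε)) := by
  rintro ⟨g, hg, H⟩
  obtain ⟨Q, hQ, δ, q0, hM⟩ := AND.exists_machine
  haveI := AND.finite_K'
  haveI : Finite (AND.Tile0 Q Turing.PartrecToTM2.K' Turing.PartrecToTM2.Γ') := AND.finite_Tile0
  let C := AND.Cell Q Turing.PartrecToTM2.K' Turing.PartrecToTM2.Γ'
  haveI : Finite C := inferInstance
  obtain ⟨a, ⟨e⟩⟩ : ∃ a : ℕ, Nonempty (C ≃ Fin a) := ⟨Nat.card C, ⟨Finite.equivFin C⟩⟩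
  let t0 : AND.Tile0 Q Turing.PartrecToTM2.K' Turing.PartrecToTM2.Γ' :=
    ⟨true, true, q0, fun _ => none, fun _ => none, fun _ => none, fun _ => none⟩
  have ha : 0 < a := lt_of_le_of_lt (Nat.zero_le _) (e (0, 0, 0, 0, t0)).2
  let da : ℕ → C := fun d => if h : d < a then e.symm ⟨d, h⟩ else (0, 0, 0, 0, t0)
  let ea : C → ℕ := fun x => (e x : ℕ)
  have hea : ∀ x, ea x < a := fun x => (e x).2
  have hde : ∀ x, da (ea x) = x := fun x => by simp [da, ea]
  let ℓ : Nat.Partrec.Code → List Turing.PartrecToTM2.Γ' :=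
    fun c => Turing.PartrecToTM2.trList [Encodable.encode c]
  have hℓ : Primrec ℓ := AND.trList_primrec.comp Primrec.encode
  let B : Nat.Partrec.Code → ℕ := fun c => a * ((ℓ c).length + 1)
  have hB : Primrec B := Primrec.nat_mul.comp (Primrec.const a)
    (Primrec.succ.comp (Primrec.list_length.comp hℓ))
  have hBpos : ∀ c, 0 < B c := fun c => Nat.mul_pos ha (Nat.succ_pos _)
  let Loc : Nat.Partrec.Code → (Fin 15 → ℕ) → Prop := fun c =>
    AND.LocD a da δ q0 Turing.PartrecToTM2.K'.main (ℓ c)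
  let Adj := AND.AdjD a da
  let E : Nat.Partrec.Code → ℕ := fun c => Encodable.encode
    (⟨B c ^ 225, AND.rule (Loc c) Adj (B c)⟩ :
      Σ n : ℕ, (Fin (n + 1) × Fin (n + 1) × Fin (n + 1) → Fin (n + 1)))
  have hE : Primrec E := AND.final_primrec ha da δ q0 Turing.PartrecToTM2.K'.main ℓ hℓ B hB hBpos
  have key : ∀ c, g (E c) = true ↔ (c.eval 0).Dom := by
    intro c
    rw [H _ _ (AND.rule_zero (hBpos c)), AND.and_iff _ (AND.rule_spread (hBpos c)),
      AND.immortal_iff (hBpos c)]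
    have := AND.tracks_iff a da ea hea hde δ q0 Turing.PartrecToTM2.K'.main (ℓ c)
    rw [hM c, ← not_iff_comm.1 this.symm]
  refine ComputablePred.halting_problem 0 ?_
  refine ComputablePred.computable_iff.2 ⟨fun c => g (E c), hg.comp hE.to_comp, ?_⟩
  funext c
  exact propext (key c).symm
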